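/- Let L_A and L_C be lattices with a least element, and suppose L_C has more than one element. Then there exist a lattice L with a least element and injective, zero-preserving lattice homomorphisms f : L_A → L and g : L_C → L such that: (1) g is congruence-preserving, i.e., for every lattice congruence θ of L_C there is exactly one lattice congruence Θ of L with Θ(g x, g y) if and only if θ(x, y) for all x, y ∈ L_C; and (2) f is automorphism-preserving, i.e., for every lattice automorphism α of L_A there is exactly one lattice automorphism β of L with β ∘ f = f ∘ α, and conversely every lattice automorphism β of L satisfies β ∘ f = f ∘ α for some lattice automorphism α of L_A. -/

import Mathlib

/-!
The lattice `L` is obtained from `Lc` by three congruence-preserving extensions, the last of which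
encodes `La`.

*Box products.* For a bounded lattice `S` and a lattice `C` with zero, `BoxProd m` consists of the
finite intersections of boxes `{(s, z) | s ≤ α ∨ z ≤ β}` in `S × C`, bounded in the second
coordinate. A marking `m` assigns to each `α` a threshold in `C` below which `β` may not drop; it is
nonzero only at coatoms. If `S` is simple in a suitably strong sense, the embedding `const` of `C`
is congruence-preserving: the extension of `θ` relates sets whose columns agree modulo `θ`, and
simplicity of `S` forces uniqueness.

*The frame.* `Frame A J` is a bounded lattice containing `A`, atoms and a chain indexed by a
well-order `J`, together with a coatom over each element of `A` and each atom, which make it simple.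
The threshold at the coatom over the atom `j` is `t j`, where `t : J → C` is a surjection taking the
value `⊥` very often, and `J` is much larger than `A` and `C`.

*Automorphisms.* Let `β` be an automorphism of the box product of such a frame with `C`. The
constants are the elements with `J` many pairwise complementary elements below them, so
`β (const y) = const (γ y)` for an automorphism `γ` of `C`. If `C` contains a nonzero `x` which is a
node in enough principal ideals, then `β` maps the pure tensor `tmul s y`, the least element
containing `(s, y)`, to some `tmul s' (γ y)` with `s'` independent of `y`, provided the threshold of
`s` is disjoint from `x`. The resulting map `s ↦ s'` preserves `A` and, since `J` is well-ordered,
fixes the atoms and the chain. The threshold `t j` can be recovered from the pure tensors over the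
atom `j` and the chain element `j` and the constants, so `γ` fixes all thresholds; as `t` is
surjective, `γ` is the identity. Thus `β` is determined by its action on `A`, and conversely each
automorphism of `A` acts on the frame and hence on the box product. So `a ↦ tmul a x` is
automorphism-preserving.

*Nodes.* To provide `x`, first pass from `Lc` to its box product with a fixed simple lattice, in
which some nonzero `x` is not maximal, and then glue on, along the filter above `x`, a box product
with this filter. The result is again a congruence-preserving extension, and `x` is a node in it.

A one-element `La` is replaced by `WithTop La`, which also has no automorphism but the identity.
-/

universe u

/-- A lattice congruence. -/
def LatCon (L : Type*) [Lattice L] (θ : L → L → Prop) : Prop :=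
  Equivalence θ ∧
  ∀ a b c d : L, θ a b → θ c d → θ (a ⊔ c) (b ⊔ d) ∧ θ (a ⊓ c) (b ⊓ d)

/-- A lattice automorphism: a bijection preserving joins and meets. -/
def IsLatAuto (L : Type*) [Lattice L] (h : L → L) : Prop :=
  Function.Bijective h ∧
  (∀ x y : L, h (x ⊔ y) = h x ⊔ h y) ∧ ∀ x y : L, h (x ⊓ y) = h x ⊓ h y

/-- A congruence-preserving lattice embedding: injective lattice homomorphism such
that every congruence of the source extends to exactly one congruence of the
target. -/
def CPEmb (Lc : Type*) [Lattice Lc] (L : Type*) [Lattice L] (g : Lc → L) : Prop :=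
  Function.Injective g ∧
  (∀ x y : Lc, g (x ⊔ y) = g x ⊔ g y) ∧ (∀ x y : Lc, g (x ⊓ y) = g x ⊓ g y) ∧
  ∀ θ : Lc → Lc → Prop, LatCon Lc θ →
    ∃! Θ : L → L → Prop, LatCon L Θ ∧ ∀ x y : Lc, (Θ (g x) (g y) ↔ θ x y)

/-- An automorphism-preserving lattice embedding: injective lattice homomorphism
such that every automorphism of the source extends to exactly one automorphism of
the target, and every automorphism of the target is such an extension. -/
def APEmb (La : Type*) [Lattice La] (L : Type*) [Lattice L] (f : La → L) : Prop :=
  Function.Injective f ∧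
  (∀ x y : La, f (x ⊔ y) = f x ⊔ f y) ∧ (∀ x y : La, f (x ⊓ y) = f x ⊓ f y) ∧
  (∀ α : La → La, IsLatAuto La α →
    ∃! β : L → L, IsLatAuto L β ∧ ∀ x : La, β (f x) = f (α x)) ∧
  (∀ β : L → L, IsLatAuto L β →
    ∃ α : La → La, IsLatAuto La α ∧ ∀ x : La, β (f x) = f (α x))

/-- The witness property for the Strong Independence Theorem for lattices with zero:
`f` and `g` are zero-preserving (they map the zeros to a least element of `L`),
`f` is automorphism-preserving, and `g` is congruence-preserving. -/
def StrongIndWitness₀ (La Lc : Type u) [Lattice La] [OrderBot La]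
    [Lattice Lc] [OrderBot Lc] (L : Type u) [Lattice L]
    (f : La → L) (g : Lc → L) : Prop :=
  IsBot (f ⊥) ∧ IsBot (g ⊥) ∧ APEmb La L f ∧ CPEmb Lc L g

/-! ### Congruences -/

/-- The preorder that the order of `L` induces on the quotient by the congruence `θ`. -/
def LeMod {L : Type*} [Lattice L] (θ : L → L → Prop) (a b : L) : Prop := θ (a ⊓ b) a

namespace LatCon

variable {L : Type*} [Lattice L] {θ : L → L → Prop} {a b c d : L}

lemma refl (h : LatCon L θ) (a : L) : θ a a := h.1.refl a

lemma symm (h : LatCon L θ) (hab : θ a b) : θ b a := h.1.symm hab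

lemma trans (h : LatCon L θ) (hab : θ a b) (hbc : θ b c) : θ a c := h.1.trans hab hbc

lemma sup (h : LatCon L θ) (hab : θ a b) (hcd : θ c d) : θ (a ⊔ c) (b ⊔ d) :=
  (h.2 a b c d hab hcd).1

lemma inf (h : LatCon L θ) (hab : θ a b) (hcd : θ c d) : θ (a ⊓ c) (b ⊓ d) :=
  (h.2 a b c d hab hcd).2

lemma of_le_of_le (h : LatCon L θ) (hab : a ≤ b) (hbc : b ≤ c) (hac : θ a c) : θ b c := by
  have := h.sup hac (h.refl b)
  rwa [sup_eq_right.2 hab, sup_eq_left.2 hbc] at this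

lemma comap {M : Type*} [Lattice M] {f : M → L} (hsup : ∀ x y, f (x ⊔ y) = f x ⊔ f y)
    (hinf : ∀ x y, f (x ⊓ y) = f x ⊓ f y) (h : LatCon L θ) :
    LatCon M fun x y => θ (f x) (f y) := by
  refine ⟨⟨fun x => h.refl _, h.symm, h.trans⟩, fun a b c d hab hcd => ?_⟩
  simp only [hsup, hinf]
  exact h.2 _ _ _ _ hab hcd

lemma leMod_of_le (h : LatCon L θ) (hab : a ≤ b) : LeMod θ a b := by
  rw [LeMod, inf_eq_left.2 hab]
  exact h.refl a

lemma leMod_trans (h : LatCon L θ) (hab : LeMod θ a b) (hbc : LeMod θ b c) : LeMod θ a c := by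
  have h₁ : θ (a ⊓ (b ⊓ c)) a := h.trans (h.inf (h.refl a) hbc) hab
  refine h.of_le_of_le ?_ inf_le_left h₁
  exact inf_le_inf_left a inf_le_right

lemma leMod_sup (h : LatCon L θ) (hac : LeMod θ a c) (hbc : LeMod θ b c) : LeMod θ (a ⊔ b) c :=
  h.of_le_of_le (sup_le (inf_le_inf_right c le_sup_left) (inf_le_inf_right c le_sup_right))
    inf_le_left (h.sup hac hbc)

lemma iff_leMod (h : LatCon L θ) : θ a b ↔ LeMod θ a b ∧ LeMod θ b a := by
  constructor
  · intro hab
    have hbb := h.inf hab (h.refl b)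
    have haa := h.inf (h.refl a) hab
    rw [inf_idem] at hbb haa
    exact ⟨h.symm haa, by rw [LeMod, inf_comm]; exact hbb⟩
  · rintro ⟨hab, hba⟩
    rw [LeMod, inf_comm] at hba
    exact h.trans (h.symm hab) hba

/-- The elements lying below `b` modulo a congruence. -/
def ideal (h : LatCon L θ) (b : L) : Order.Ideal L where
  carrier := {a | LeMod θ a b}
  lower' _ _ hle ha := h.leMod_trans (h.leMod_of_le hle) ha
  nonempty' := ⟨b, h.leMod_of_le le_rfl⟩
  directed' a ha a' ha' := ⟨a ⊔ a', h.leMod_sup ha ha', le_sup_left, le_sup_right⟩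

end LatCon

lemma CPEmb.comp {A B C : Type*} [Lattice A] [Lattice B] [Lattice C] {g : B → C} {f : A → B}
    (hg : CPEmb B C g) (hf : CPEmb A B f) : CPEmb A C (g ∘ f) := by
  obtain ⟨g_inj, g_sup, g_inf, g_ext⟩ := hg
  obtain ⟨f_inj, f_sup, f_inf, f_ext⟩ := hf
  refine ⟨g_inj.comp f_inj, by simp [f_sup, g_sup], by simp [f_inf, g_inf], fun θ hθ => ?_⟩
  obtain ⟨Θ, ⟨hΘ, hΘθ⟩, Θ_unique⟩ := f_ext θ hθ
  obtain ⟨Φ, ⟨hΦ, hΦΘ⟩, Φ_unique⟩ := g_ext Θ hΘ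
  refine ⟨Φ, ⟨hΦ, fun x y => by simp [hΦΘ, hΘθ]⟩, fun Ψ ⟨hΨ, hΨθ⟩ => Φ_unique Ψ ⟨hΨ, ?_⟩⟩
  have restrict_eq : (fun x y => Ψ (g x) (g y)) = Θ :=
    Θ_unique _ ⟨hΨ.comap g_sup g_inf, hΨθ⟩
  simp [← restrict_eq]

/-! ### Box products -/

/-- A threshold in `C` for every element of `S`, used to make a box product of `S` and `C` remember
elements of `C`. By `eq_top_of_lt`, raising the second coordinate of the corner of a box to its
threshold does not lead out of any larger box that respects the thresholds. -/
structure Marking (S C : Type*) [Lattice S] [BoundedOrder S] [Lattice C] [OrderBot C] where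
  threshold : S → C
  threshold_bot : threshold ⊥ = ⊥
  threshold_top : threshold ⊤ = ⊥
  eq_top_of_lt : ∀ {α α' : S}, α < α' → threshold α ≠ ⊥ → α' = ⊤

section BoxProd

variable {S C : Type*} [Lattice S] [BoundedOrder S] [Lattice C] [OrderBot C]

/-- `p` lies in the box with corner `q`, which is the union of a vertical and a horizontal strip. -/
def InBox (q p : S × C) : Prop := p.1 ≤ q.1 ∨ p.2 ≤ q.2

/-- The corner `q` respects the thresholds of the marking. -/
def Marking.Admits (m : Marking S C) (q : S × C) : Prop := m.threshold q.1 ≤ q.2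

lemma Marking.admits_bot_left (m : Marking S C) (b : C) : m.Admits (⊥, b) := by
  simp [Marking.Admits, m.threshold_bot]

/-- The finite intersections of admissible boxes. The box with corner `(⊥, b)` is required so that
the second coordinates are bounded outside the column of `⊥`. -/
def IsBoxInter (m : Marking S C) (H : Set (S × C)) : Prop :=
  ∃ B : Finset (S × C), (∀ q ∈ B, m.Admits q) ∧ (∃ b, (⊥, b) ∈ B) ∧
    ∀ p, p ∈ H ↔ ∀ q ∈ B, InBox q p

/-- The box product of `S` and `C` in which only the boxes admitted by the marking `m` are used,
ordered by inclusion. If all thresholds are `⊥`, it is the lattice tensor product of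
Grätzer and Wehrung. -/
def BoxProd (m : Marking S C) : Type _ := {H : Set (S × C) // IsBoxInter m H}

variable {m : Marking S C}

namespace BoxProd

instance : PartialOrder (BoxProd m) :=
  inferInstanceAs (PartialOrder {H : Set (S × C) // IsBoxInter m H})

instance : Membership (S × C) (BoxProd m) := ⟨fun H p => p ∈ H.1⟩

lemma le_def {H K : BoxProd m} : H ≤ K ↔ ∀ p ∈ H, p ∈ K := Iff.rfl

@[ext]
lemma ext {H K : BoxProd m} (h : ∀ p, p ∈ H ↔ p ∈ K) : H = K := Subtype.ext (Set.ext h)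

lemma mem_of_le {H : BoxProd m} {p p' : S × C} (hp : p ∈ H) (hle : p' ≤ p) : p' ∈ H := by
  obtain ⟨B, -, -, hH⟩ := H.2
  exact (hH p').2 fun q hq => ((hH p).1 hp q hq).imp hle.1.trans hle.2.trans

lemma bot_left_mem (H : BoxProd m) (z : C) : (⊥, z) ∈ H := by
  obtain ⟨B, -, -, hH⟩ := H.2
  exact (hH _).2 fun q _ => Or.inl bot_le

lemma bot_right_mem (H : BoxProd m) (s : S) : (s, ⊥) ∈ H := by
  obtain ⟨B, -, -, hH⟩ := H.2
  exact (hH _).2 fun q _ => Or.inr bot_le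

lemma sup_left_mem {H : BoxProd m} {s t : S} {z : C} (hs : (s, z) ∈ H) (ht : (t, z) ∈ H) :
    (s ⊔ t, z) ∈ H := by
  obtain ⟨B, -, -, hH⟩ := H.2
  refine (hH _).2 fun q hq => ?_
  rcases (hH _).1 hs q hq with hs | hz
  · exact ((hH _).1 ht q hq).imp_left (sup_le hs)
  · exact Or.inr hz

lemma sup_right_mem {H : BoxProd m} {s : S} {z w : C} (hz : (s, z) ∈ H) (hw : (s, w) ∈ H) :
    (s, z ⊔ w) ∈ H := by
  obtain ⟨B, -, -, hH⟩ := H.2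
  refine (hH _).2 fun q hq => ?_
  rcases (hH _).1 hz q hq with hs | hz
  · exact Or.inl hs
  · exact ((hH _).1 hw q hq).imp_right (sup_le hz)

open scoped Classical in
lemma exists_row (H : BoxProd m) (z : C) : ∃ s, ∀ t, (t, z) ∈ H ↔ t ≤ s := by
  obtain ⟨B, -, -, hH⟩ := H.2
  refine ⟨(B.filter fun q => ¬ z ≤ q.2).inf Prod.fst, fun t => (hH _).trans ?_⟩
  simp only [InBox, Finset.le_inf_iff, Finset.mem_filter, and_imp, or_iff_not_imp_right]

open scoped Classical in
lemma exists_column (H : BoxProd m) {s : S} (hs : s ≠ ⊥) : ∃ y, ∀ z, (s, z) ∈ H ↔ z ≤ y := by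
  obtain ⟨B, -, ⟨b, hb⟩, hH⟩ := H.2
  have nonempty : (B.filter fun q => ¬ s ≤ q.1).Nonempty :=
    ⟨_, Finset.mem_filter.2 ⟨hb, fun h => hs (le_bot_iff.1 h)⟩⟩
  refine ⟨(B.filter fun q => ¬ s ≤ q.1).inf' nonempty Prod.snd, fun z => (hH _).trans ?_⟩
  simp only [InBox, Finset.le_inf'_iff, Finset.mem_filter, and_imp, or_iff_not_imp_left]

lemma exists_separating_box {H : BoxProd m} {p : S × C} (hp : p ∉ H) :
    ∃ q, m.Admits q ∧ (∀ p' ∈ H, InBox q p') ∧ ¬ InBox q p := by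
  obtain ⟨B, hB, -, hH⟩ := H.2
  have hsep := mt (hH p).2 hp
  push Not at hsep
  obtain ⟨q, hq, hqp⟩ := hsep
  exact ⟨q, hB q hq, fun p' hp' => (hH p').1 hp' q hq, hqp⟩

open scoped Classical in
/-- Admissible corners of boxes containing `F`, one for each choice of the set `X` of those points
that are absorbed by the vertical strip. Every admissible box containing `F` contains one of
these. -/
noncomputable def corners (m : Marking S C) (F : Finset (S × C)) : Finset (S × C) :=
  F.powerset.image fun X =>
    (X.sup Prod.fst, (F \ X).sup Prod.snd ⊔ m.threshold (X.sup Prod.fst))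

/-- The least element of the box product containing the points of `F`. -/
noncomputable def closure (m : Marking S C) (F : Finset (S × C)) : BoxProd m where
  val := {p | ∀ q ∈ corners m F, InBox q p}
  property := by
    classical
    refine ⟨corners m F, fun q hq => ?_, ⟨F.sup Prod.snd, ?_⟩, fun p => Iff.rfl⟩
    · obtain ⟨X, -, rfl⟩ := Finset.mem_image.1 hq
      exact le_sup_right
    · exact Finset.mem_image.2 ⟨∅, by simp, by simp [m.threshold_bot]⟩

open scoped Classical in
lemma mem_closure {F : Finset (S × C)} {p : S × C} : p ∈ closure m F ↔ ∀ X ⊆ F,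
    p.1 ≤ X.sup Prod.fst ∨ p.2 ≤ (F \ X).sup Prod.snd ⊔ m.threshold (X.sup Prod.fst) := by
  refine (Finset.forall_mem_image).trans ?_
  simp only [Finset.mem_powerset, InBox]

lemma mem_closure_of_mem {F : Finset (S × C)} {p : S × C} (hp : p ∈ F) : p ∈ closure m F := by
  classical
  refine mem_closure.2 fun X _ => ?_
  by_cases hX : p ∈ X
  · exact Or.inl (Finset.le_sup (f := Prod.fst) hX)
  · exact Or.inr (le_sup_of_le_left
      (Finset.le_sup (f := Prod.snd) (Finset.mem_sdiff.2 ⟨hp, hX⟩)))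

/- Allowing an ideal `I` in place of a single bound on the second coordinate covers, besides boxes,
boxes modulo a congruence of `C`. -/
lemma mem_idealBox_of_mem_closure {F : Finset (S × C)} {α : S} {I : Order.Ideal C}
    (hα : m.threshold α ∈ I) (hF : ∀ p ∈ F, p.1 ≤ α ∨ p.2 ∈ I) {p : S × C}
    (hp : p ∈ closure m F) : p.1 ≤ α ∨ p.2 ∈ I := by
  classical
  set X := F.filter fun p => p.1 ≤ α
  have hXα : X.sup Prod.fst ≤ α := Finset.sup_le fun p hp => (Finset.mem_filter.1 hp).2
  have hXI : (F \ X).sup Prod.snd ∈ I := (Order.Ideal.finsetSup_mem_iff I).2 fun p hp =>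
    have hp := Finset.mem_sdiff.1 hp
    (hF p hp.1).resolve_left fun h => hp.2 (Finset.mem_filter.2 ⟨hp.1, h⟩)
  rcases mem_closure.1 hp X (Finset.filter_subset _ _) with hp | hp
  · exact Or.inl (hp.trans hXα)
  rcases hXα.eq_or_lt with heq | hlt
  · exact Or.inr (I.lower hp (Order.Ideal.sup_mem hXI (heq ▸ hα)))
  by_cases hthr : m.threshold (X.sup Prod.fst) = ⊥
  · rw [hthr, sup_bot_eq] at hp
    exact Or.inr (I.lower hp hXI)
  · exact Or.inl (m.eq_top_of_lt hlt hthr ▸ le_top)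

lemma closure_le {F : Finset (S × C)} {H : BoxProd m} : closure m F ≤ H ↔ ∀ p ∈ F, p ∈ H := by
  refine ⟨fun h p hp => h (mem_closure_of_mem hp), fun h p hp => ?_⟩
  obtain ⟨B, hB, -, hH⟩ := H.2
  exact (hH p).2 fun q hq => mem_idealBox_of_mem_closure (I := .principal q.2) (hB q hq)
    (fun p' hp' => (hH p').1 (h p' hp') q hq) hp

/-- Distributing the intersection over the two strips of each box writes an element as a finite
union of rectangles, whose upper right corners generate it. -/
lemma exists_generators (H : BoxProd m) :
    ∃ F : Finset (S × C), ∀ K : BoxProd m, H ≤ K ↔ ∀ p ∈ F, p ∈ K := by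
  classical
  obtain ⟨B, -, ⟨b, hb⟩, hH⟩ := H.2
  let rectangle (X : Finset (S × C)) : S × C :=
    (X.inf Prod.fst, (insert (⊥, b) (B \ X)).inf' (Finset.insert_nonempty _ _) Prod.snd)
  have rectangle_mem (X : Finset (S × C)) : rectangle X ∈ H := (hH _).2 fun q hq => by
    by_cases hX : q ∈ X
    · exact Or.inl (Finset.inf_le (f := Prod.fst) hX)
    · exact Or.inr (Finset.inf'_le _ (Finset.mem_insert_of_mem (Finset.mem_sdiff.2 ⟨hq, hX⟩)))
  have le_rectangle {p : S × C} (hp : p ∈ H) (hbot : p.1 ≠ ⊥) :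
      p ≤ rectangle (B.filter fun q => p.1 ≤ q.1) := by
    have hpB := (hH p).1 hp
    refine ⟨Finset.le_inf fun q hq => (Finset.mem_filter.1 hq).2,
      Finset.le_inf' (Finset.insert_nonempty _ _) _ fun q hq => ?_⟩
    rcases Finset.mem_insert.1 hq with rfl | hq
    · exact (hpB _ hb).resolve_left fun h => hbot (le_bot_iff.1 h)
    · have hq := Finset.mem_sdiff.1 hq
      exact (hpB q hq.1).resolve_left fun h => hq.2 (Finset.mem_filter.2 ⟨hq.1, h⟩)
  refine ⟨B.powerset.image rectangle, fun K => ⟨fun h p hp => ?_, fun h p hp => ?_⟩⟩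
  · obtain ⟨X, -, rfl⟩ := Finset.mem_image.1 hp
    exact h (rectangle_mem X)
  · by_cases hbot : p.1 = ⊥
    · obtain ⟨s, z⟩ := p
      obtain rfl : s = ⊥ := hbot
      exact bot_left_mem K z
    · refine mem_of_le (h _ (Finset.mem_image_of_mem _ ?_)) (le_rectangle hp hbot)
      exact Finset.mem_powerset.2 (Finset.filter_subset _ _)

/-- A finite set of points generating `H`. -/
noncomputable def generators (H : BoxProd m) : Finset (S × C) := H.exists_generators.choose

lemma le_iff_generators {H K : BoxProd m} : H ≤ K ↔ ∀ p ∈ H.generators, p ∈ K :=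
  H.exists_generators.choose_spec K

lemma mem_of_mem_generators {H : BoxProd m} {p : S × C} (hp : p ∈ H.generators) : p ∈ H :=
  le_iff_generators.1 le_rfl p hp

lemma isBoxInter_inter (H K : BoxProd m) : IsBoxInter m (H.1 ∩ K.1) := by
  classical
  obtain ⟨B, hB, ⟨b, hb⟩, hH⟩ := H.2
  obtain ⟨B', hB', -, hK⟩ := K.2
  refine ⟨B ∪ B', fun q hq => (Finset.mem_union.1 hq).elim (hB q) (hB' q),
    ⟨b, Finset.mem_union_left _ hb⟩, fun p => ?_⟩
  simp only [Set.mem_inter_iff, hH, hK, Finset.mem_union, or_imp, forall_and]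

open scoped Classical in
noncomputable instance : Lattice (BoxProd m) where
  sup H K := closure m (H.generators ∪ K.generators)
  inf H K := ⟨H.1 ∩ K.1, isBoxInter_inter H K⟩
  le_sup_left _ _ := le_iff_generators.2 fun _ hp =>
    mem_closure_of_mem (Finset.mem_union_left _ hp)
  le_sup_right _ _ := le_iff_generators.2 fun _ hp =>
    mem_closure_of_mem (Finset.mem_union_right _ hp)
  sup_le _ _ _ hH hK := closure_le.2 fun _ hp => (Finset.mem_union.1 hp).elim
    (fun hp => hH (mem_of_mem_generators hp)) (fun hp => hK (mem_of_mem_generators hp))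
  inf_le_left _ _ _ hp := hp.1
  inf_le_right _ _ _ hp := hp.2
  le_inf _ _ _ hK hM _ hp := ⟨hK hp, hM hp⟩

noncomputable instance : OrderBot (BoxProd m) where
  bot := closure m ∅
  bot_le _ := closure_le.2 (by simp)

lemma mem_inf {H K : BoxProd m} {p : S × C} : p ∈ H ⊓ K ↔ p ∈ H ∧ p ∈ K := Iff.rfl

lemma mem_bot {s : S} {z : C} : (s, z) ∈ (⊥ : BoxProd m) ↔ s = ⊥ ∨ z = ⊥ := by
  refine (mem_closure (F := ∅)).trans ?_
  simp [m.threshold_bot]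

lemma mem_idealBox_of_mem_sup {H K : BoxProd m} {α : S} {I : Order.Ideal C}
    (hα : m.threshold α ∈ I) (hH : ∀ p ∈ H, p.1 ≤ α ∨ p.2 ∈ I) (hK : ∀ p ∈ K, p.1 ≤ α ∨ p.2 ∈ I)
    {p : S × C} (hp : p ∈ H ⊔ K) : p.1 ≤ α ∨ p.2 ∈ I := by
  classical
  exact mem_idealBox_of_mem_closure (F := H.generators ∪ K.generators) hα
    (fun p' hp' => (Finset.mem_union.1 hp').elim
      (fun hp' => hH p' (mem_of_mem_generators hp'))
      (fun hp' => hK p' (mem_of_mem_generators hp'))) hp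

lemma inBox_of_mem_sup {H K : BoxProd m} {q : S × C} (hq : m.Admits q) (hH : ∀ p ∈ H, InBox q p)
    (hK : ∀ p ∈ K, InBox q p) {p : S × C} (hp : p ∈ H ⊔ K) : InBox q p :=
  mem_idealBox_of_mem_sup (I := .principal q.2) hq hH hK hp

/-! ### Pure tensors and constants -/

/-- The least element containing the point `(s, z)`, called a pure tensor by analogy with
`TensorProduct`. -/
noncomputable def tmul (m : Marking S C) (s : S) (z : C) : BoxProd m := closure m {(s, z)}

lemma tmul_le {s : S} {z : C} {H : BoxProd m} : tmul m s z ≤ H ↔ (s, z) ∈ H := by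
  simp [tmul, closure_le]

lemma mem_tmul_self (s : S) (z : C) : (s, z) ∈ tmul m s z := tmul_le.1 le_rfl

lemma mem_tmul {s t : S} {z w : C} :
    (t, w) ∈ tmul m s z ↔ (t ≤ s ∨ w ≤ m.threshold s) ∧ (t = ⊥ ∨ w ≤ z) := by
  classical
  rw [tmul, mem_closure]
  simp only [Finset.subset_singleton_iff, forall_eq_or_imp, forall_eq]
  simp [m.threshold_bot, and_comm]

lemma inBox_of_mem_tmul {s : S} {z : C} {q p : S × C} (hq : m.Admits q) (h : InBox q (s, z))
    (hp : p ∈ tmul m s z) : InBox q p :=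
  mem_idealBox_of_mem_closure (F := {(s, z)}) (I := .principal q.2) hq (by simpa [InBox] using h) hp

lemma tmul_mono {s t : S} {z w : C} (hs : s ≤ t) (hz : z ≤ w) : tmul m s z ≤ tmul m t w :=
  tmul_le.2 (mem_of_le (mem_tmul_self t w) ⟨hs, hz⟩)

@[simp] lemma tmul_bot_left (z : C) : tmul m ⊥ z = ⊥ := le_bot_iff.1 (tmul_le.2 (bot_left_mem _ _))

@[simp] lemma tmul_bot_right (s : S) : tmul m s ⊥ = ⊥ :=
  le_bot_iff.1 (tmul_le.2 (bot_right_mem _ _))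

lemma tmul_sup_left (s t : S) (z : C) : tmul m (s ⊔ t) z = tmul m s z ⊔ tmul m t z :=
  le_antisymm (tmul_le.2 (sup_left_mem (tmul_le.1 le_sup_left) (tmul_le.1 le_sup_right)))
    (sup_le (tmul_mono le_sup_left le_rfl) (tmul_mono le_sup_right le_rfl))

lemma tmul_sup_right (s : S) (z w : C) : tmul m s (z ⊔ w) = tmul m s z ⊔ tmul m s w :=
  le_antisymm (tmul_le.2 (sup_right_mem (tmul_le.1 le_sup_left) (tmul_le.1 le_sup_right)))
    (sup_le (tmul_mono le_rfl le_sup_left) (tmul_mono le_rfl le_sup_right))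

lemma tmul_inf_left {s t : S} (hs : m.threshold s = ⊥) (ht : m.threshold t = ⊥) (z : C) :
    tmul m (s ⊓ t) z = tmul m s z ⊓ tmul m t z := by
  apply le_antisymm (le_inf (tmul_mono inf_le_left le_rfl) (tmul_mono inf_le_right le_rfl))
  rintro ⟨u, v⟩ ⟨hus, hut⟩
  obtain ⟨hus, huz⟩ := mem_tmul.1 hus
  obtain ⟨hut, -⟩ := mem_tmul.1 hut
  rw [hs, le_bot_iff] at hus
  rw [ht, le_bot_iff] at hut
  rcases hus with hus | rfl
  · rcases hut with hut | rfl
    · exact mem_tmul.2 ⟨Or.inl (le_inf hus hut), huz⟩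
    · exact bot_right_mem _ _
  · exact bot_right_mem _ _

/-- The element whose columns, except that of `⊥`, all equal the ideal below `z`. -/
noncomputable def const (m : Marking S C) (z : C) : BoxProd m := tmul m ⊤ z

lemma mem_const {t : S} {z w : C} : (t, w) ∈ const m z ↔ t = ⊥ ∨ w ≤ z := by
  simp [const, mem_tmul]

lemma const_le {z : C} {H : BoxProd m} : const m z ≤ H ↔ (⊤, z) ∈ H := tmul_le

lemma tmul_le_const (s : S) (z : C) : tmul m s z ≤ const m z := tmul_mono le_top le_rfl

@[simp] lemma const_bot : const m ⊥ = ⊥ := tmul_bot_right _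

lemma tmul_inf_const (s : S) (z w : C) : tmul m s z ⊓ const m w = tmul m s (z ⊓ w) := by
  ext ⟨t, v⟩
  rw [mem_inf, mem_tmul, mem_tmul, mem_const, le_inf_iff]
  tauto

lemma const_sup (z w : C) : const m (z ⊔ w) = const m z ⊔ const m w := tmul_sup_right _ _ _

lemma const_inf (z w : C) : const m (z ⊓ w) = const m z ⊓ const m w := (tmul_inf_const _ _ _).symm

lemma const_le_const [Nontrivial S] {z w : C} : const m z ≤ const m w ↔ z ≤ w := by
  simp [const_le, mem_const]

lemma const_injective [Nontrivial S] : Function.Injective (const m) := fun _ _ h =>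
  le_antisymm (const_le_const.1 h.le) (const_le_const.1 h.ge)

lemma exists_le_const (H : BoxProd m) : ∃ b, H ≤ const m b := by
  obtain ⟨B, -, ⟨b, hb⟩, hH⟩ := H.2
  exact ⟨b, fun p hp => mem_const.2 (((hH p).1 hp _ hb).imp_left le_bot_iff.1)⟩

end BoxProd

end BoxProd

/-! ### Congruences of box products -/

section BoxCongruence

variable {S C : Type*} [Lattice S] [BoundedOrder S] [Lattice C] [OrderBot C] {m : Marking S C}
  {θ : C → C → Prop}

/-- `H ⊆ K` modulo `θ`: every column of `H` is contained in that of `K` up to `θ`. -/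
def LeCon (θ : C → C → Prop) (H K : BoxProd m) : Prop :=
  ∀ s z, (s, z) ∈ H → ∃ z' ≤ z, θ z z' ∧ (s, z') ∈ K

/-- The extension of a congruence `θ` of `C` to the box product. -/
def BoxCon (θ : C → C → Prop) (H K : BoxProd m) : Prop := LeCon θ H K ∧ LeCon θ K H

lemma BoxProd.exists_lowering (hθ : LatCon C θ) {K : BoxProd m} {s : S} {z : C}
    (h : ∀ q, m.Admits q → (∀ p ∈ K, InBox q p) → s ≤ q.1 ∨ LeMod θ z q.2) :
    ∃ z' ≤ z, θ z z' ∧ (s, z') ∈ K := by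
  classical
  obtain ⟨B, hB, -, hK⟩ := K.2
  have lowering (B' : Finset (S × C)) (hB' : B' ⊆ B) :
      ∃ z' ≤ z, θ z z' ∧ ∀ q ∈ B', InBox q (s, z') := by
    induction B' using Finset.induction_on with
    | empty => exact ⟨z, le_rfl, hθ.refl z, by simp⟩
    | insert q B' _ ih =>
      have hq : q ∈ B := hB' (Finset.mem_insert_self _ _)
      obtain ⟨z', hz'z, hzz', hz'⟩ := ih ((Finset.subset_insert _ _).trans hB')
      rcases h q (hB q hq) fun p hp => (hK p).1 hp q hq with hs | hz
      · exact ⟨z', hz'z, hzz', Finset.forall_mem_insert _ _ _ |>.2 ⟨Or.inl hs, hz'⟩⟩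
      · refine ⟨z' ⊓ q.2, inf_le_left.trans hz'z, ?_, Finset.forall_mem_insert _ _ _ |>.2
          ⟨Or.inr inf_le_right, fun q' hq' => (hz' q' hq').imp_right inf_le_left.trans⟩⟩
        exact hθ.trans (hθ.symm hz) (hθ.inf hzz' (hθ.refl _))
  obtain ⟨z', hz'z, hzz', hz'⟩ := lowering B subset_rfl
  exact ⟨z', hz'z, hzz', (hK _).2 hz'⟩

namespace LeCon

lemma of_le (hθ : LatCon C θ) {H K : BoxProd m} (h : H ≤ K) : LeCon θ H K :=
  fun _ z hz => ⟨z, le_rfl, hθ.refl z, h hz⟩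

lemma trans (hθ : LatCon C θ) {H K M : BoxProd m} (h : LeCon θ H K) (h' : LeCon θ K M) :
    LeCon θ H M := fun s z hz => by
  obtain ⟨z', hz'z, hzz', hz'⟩ := h s z hz
  obtain ⟨z'', hz''z', hz'z'', hz''⟩ := h' s z' hz'
  exact ⟨z'', hz''z'.trans hz'z, hθ.trans hzz' hz'z'', hz''⟩

lemma sup_le (hθ : LatCon C θ) {H K M : BoxProd m} (hH : LeCon θ H M) (hK : LeCon θ K M) :
    LeCon θ (H ⊔ K) M := fun s z hz => by
  refine BoxProd.exists_lowering hθ fun q hq hM => ?_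
  have idealBox {N : BoxProd m} (hN : LeCon θ N M) (p : S × C) (hp : p ∈ N) :
      p.1 ≤ q.1 ∨ p.2 ∈ hθ.ideal q.2 := by
    obtain ⟨z', hz', hpz', hmem⟩ := hN p.1 p.2 hp
    exact (hM _ hmem).imp_right fun hle =>
      hθ.of_le_of_le (le_inf hz' hle) inf_le_left (hθ.symm hpz')
  exact BoxProd.mem_idealBox_of_mem_sup (hθ.leMod_of_le hq) (idealBox hH) (idealBox hK) hz

lemma le_inf (hθ : LatCon C θ) {H K M : BoxProd m} (hK : LeCon θ H K) (hM : LeCon θ H M) :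
    LeCon θ H (K ⊓ M) := fun s z hz => by
  obtain ⟨z', hz'z, hzz', hz'⟩ := hK s z hz
  obtain ⟨z'', -, hzz'', hz''⟩ := hM s z hz
  refine ⟨z' ⊓ z'', inf_le_left.trans hz'z, ?_, BoxProd.mem_of_le hz' ⟨le_rfl, inf_le_left⟩,
    BoxProd.mem_of_le hz'' ⟨le_rfl, inf_le_right⟩⟩
  simpa only [inf_idem] using hθ.inf hzz' hzz''

lemma sup (hθ : LatCon C θ) {H H' K K' : BoxProd m} (h : LeCon θ H K) (h' : LeCon θ H' K') :
    LeCon θ (H ⊔ H') (K ⊔ K') :=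
  sup_le hθ (h.trans hθ (of_le hθ le_sup_left)) (h'.trans hθ (of_le hθ le_sup_right))

lemma inf (hθ : LatCon C θ) {H H' K K' : BoxProd m} (h : LeCon θ H K) (h' : LeCon θ H' K') :
    LeCon θ (H ⊓ H') (K ⊓ K') :=
  le_inf hθ ((of_le hθ inf_le_left).trans hθ h) ((of_le hθ inf_le_right).trans hθ h')

end LeCon

lemma LatCon.boxCon (hθ : LatCon C θ) : LatCon (BoxProd m) (BoxCon θ) :=
  ⟨⟨fun _ => ⟨.of_le hθ le_rfl, .of_le hθ le_rfl⟩, And.symm,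
      fun h h' => ⟨h.1.trans hθ h'.1, h'.2.trans hθ h.2⟩⟩,
    fun _ _ _ _ h h' => ⟨⟨h.1.sup hθ h'.1, h.2.sup hθ h'.2⟩, ⟨h.1.inf hθ h'.1, h.2.inf hθ h'.2⟩⟩⟩

lemma leMod_of_leCon_tmul (hθ : LatCon C θ) {s : S} (hs : s ≠ ⊥) {y y' : C}
    (h : LeCon θ (BoxProd.tmul m s y) (BoxProd.tmul m s y')) : LeMod θ y y' := by
  obtain ⟨z, hzy, hyz, hz⟩ := h s y (BoxProd.mem_tmul_self s y)
  have hzy' : z ≤ y' := (BoxProd.mem_tmul.1 hz).2.resolve_left hs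
  exact hθ.of_le_of_le (le_inf hzy hzy') inf_le_left (hθ.symm hyz)

lemma leCon_const [Nontrivial S] (hθ : LatCon C θ) {y y' : C} :
    LeCon θ (BoxProd.const m y) (BoxProd.const m y') ↔ LeMod θ y y' := by
  refine ⟨leMod_of_leCon_tmul hθ top_ne_bot, fun h s z hz => ?_⟩
  refine BoxProd.exists_lowering hθ fun q _ hq => ?_
  rcases BoxProd.mem_const.1 hz with rfl | hz
  · exact Or.inl bot_le
  · exact (hq (s, y') (BoxProd.mem_const.2 (Or.inr le_rfl))).imp_right fun hy' =>
      hθ.leMod_trans (hθ.leMod_of_le hz) (hθ.leMod_trans h (hθ.leMod_of_le hy'))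

lemma boxCon_const [Nontrivial S] (hθ : LatCon C θ) {y y' : C} :
    BoxCon θ (BoxProd.const m y) (BoxProd.const m y') ↔ θ y y' := by
  rw [hθ.iff_leMod, BoxCon, leCon_const hθ, leCon_const hθ]

lemma boxCon_tmul (hθ : LatCon C θ) {s : S} (hs : s ≠ ⊥) {y y' : C} :
    BoxCon θ (BoxProd.tmul m s y) (BoxProd.tmul m s y') ↔ θ y y' := by
  have : Nontrivial S := ⟨s, ⊥, hs⟩
  constructor
  · exact fun h => hθ.iff_leMod.2 ⟨leMod_of_leCon_tmul hθ hs h.1, leMod_of_leCon_tmul hθ hs h.2⟩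
  · intro h
    have := hθ.boxCon.inf (hθ.boxCon.refl (BoxProd.tmul m s (y ⊔ y'))) ((boxCon_const hθ).2 h)
    simpa [BoxProd.tmul_inf_const] using this

namespace BoxProd

lemma eq_sup_tmul (H : BoxProd m) : H = H.generators.sup fun p => tmul m p.1 p.2 :=
  le_antisymm
    (le_iff_generators.2 fun p hp =>
      Finset.le_sup (f := fun p => tmul m p.1 p.2) hp (mem_tmul_self p.1 p.2))
    (Finset.sup_le fun _ hp => tmul_le.2 (mem_of_mem_generators hp))

variable {Ψ : BoxProd m → BoxProd m → Prop}

lemma leMod_of_leCon (hΨ : LatCon (BoxProd m) Ψ)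
    (hΨθ : ∀ y y', Ψ (const m y) (const m y') ↔ θ y y') {H K : BoxProd m} (h : LeCon θ H K) :
    LeMod Ψ H K := by
  change H ∈ hΨ.ideal K
  rw [H.eq_sup_tmul, Order.Ideal.finsetSup_mem_iff]
  intro p hp
  obtain ⟨z, hz, hpz, hmem⟩ := h p.1 p.2 (mem_of_mem_generators hp)
  have tmul_rel : Ψ (tmul m p.1 z) (tmul m p.1 p.2) := by
    have := hΨ.inf (hΨ.refl (tmul m p.1 p.2)) ((hΨθ _ _).2 hpz)
    rw [tmul_inf_const, tmul_inf_const, inf_idem, inf_eq_right.2 hz] at this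
    exact hΨ.symm this
  exact hΨ.of_le_of_le (le_inf (tmul_mono le_rfl hz) (tmul_le.2 hmem)) inf_le_left tmul_rel

/-- The step that rises from the constant `c` to the constant `b` over the elements below `u`. -/
noncomputable def step (m : Marking S C) (c b : C) (u : S) : BoxProd m := tmul m u b ⊔ const m c

/-- The threshold of `u` does not affect the step that rises from `c` to `b` over `u`. -/
def _root_.Marking.AdmitsStep (m : Marking S C) (c b : C) (u : S) : Prop :=
  b ⊓ (c ⊔ m.threshold u) ≤ c

lemma admitsStep_of_threshold_eq_bot {c b : C} {u : S} (hu : m.threshold u = ⊥) :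
    m.AdmitsStep c b u := by
  simp [Marking.AdmitsStep, hu]

lemma admitsStep_inf {c b : C} {u v : S} (hu : m.AdmitsStep c b u) (hv : m.AdmitsStep c b v) :
    m.AdmitsStep c b (u ⊓ v) := by
  rcases (inf_le_left : u ⊓ v ≤ u).eq_or_lt with huv | huv
  · rwa [huv]
  by_cases hthr : m.threshold (u ⊓ v) = ⊥
  · exact admitsStep_of_threshold_eq_bot hthr
  · rwa [m.eq_top_of_lt huv hthr, top_inf_eq]

lemma mem_step {c b w : C} {u t : S} (hcb : c ≤ b) (hu : m.AdmitsStep c b u) :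
    (t, w) ∈ step m c b u ↔ t = ⊥ ∨ w ≤ b ∧ (t ≤ u ∨ w ≤ c) := by
  constructor
  · intro h
    have inBox {q : S × C} (hq : m.Admits q) (hb : InBox q (u, b)) (hc : InBox q (⊤, c)) :
        InBox q (t, w) :=
      inBox_of_mem_sup (H := tmul m u b) (K := const m c) hq
        (fun _ => inBox_of_mem_tmul hq hb) (fun _ => inBox_of_mem_tmul hq hc) h
    have hb := inBox (m.admits_bot_left b) (Or.inr le_rfl) (Or.inr hcb)
    have hbox := inBox (q := (u, c ⊔ m.threshold u)) le_sup_right (Or.inl le_rfl)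
      (Or.inr le_sup_left)
    exact hb.imp le_bot_iff.1 fun hwb => ⟨hwb, hbox.imp_right fun hw => (le_inf hwb hw).trans hu⟩
  · rintro (rfl | ⟨hwb, htu | hwc⟩)
    · exact bot_left_mem _ _
    · exact (le_sup_left : tmul m u b ≤ step m c b u) (mem_of_le (mem_tmul_self u b) ⟨htu, hwb⟩)
    · exact (le_sup_right : const m c ≤ step m c b u) (mem_const.2 (Or.inr hwc))

lemma step_sup_tmul (c b : C) (u v : S) : step m c b u ⊔ tmul m v b = step m c b (u ⊔ v) := by
  rw [step, step, sup_right_comm, tmul_sup_left]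

lemma step_inf {c b : C} {u v : S} (hcb : c ≤ b) (hu : m.AdmitsStep c b u)
    (hv : m.AdmitsStep c b v) : step m c b u ⊓ step m c b v = step m c b (u ⊓ v) := by
  ext ⟨t, w⟩
  rw [mem_inf, mem_step hcb hu, mem_step hcb hv, mem_step hcb (admitsStep_inf hu hv), le_inf_iff]
  tauto

end BoxProd

/-- Every `s ≰ α` is witnessed by an element below `s` of threshold `⊥`, or can be joined to `⊤`
with a proper element above `α` of threshold `⊥`. -/
def Marking.IsSeparating (m : Marking S C) : Prop := ∀ ⦃s α⦄, ¬ s ≤ α →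
  (∃ p ≤ s, m.threshold p = ⊥ ∧ ¬ p ≤ α) ∨
    ∃ d, m.threshold d = ⊥ ∧ α ≤ d ∧ d ≠ ⊤ ∧ s ⊔ d = ⊤

/-- `r` is an equivalence relation compatible with joins, and compatible with meets at least inside
a set `P` containing all elements of threshold `⊥`. -/
structure Marking.IsPartialCon (m : Marking S C) (r : S → S → Prop) (P : S → Prop) : Prop where
  equivalence : Equivalence r
  of_threshold_eq_bot : ∀ {u}, m.threshold u = ⊥ → P u
  sup : ∀ {u v} w, r u v → r (u ⊔ w) (v ⊔ w)
  inf : ∀ {u v w}, P u → P v → P w → r u v → r (u ⊓ w) (v ⊓ w)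

/-- A strong form of simplicity of `S`: a partial congruence identifying two comparable distinct
elements of its domain identifies `⊥` and `⊤`. -/
def Marking.IsStronglySimple (m : Marking S C) : Prop :=
  ∀ {r P}, m.IsPartialCon r P → ∀ {u v}, u < v → P u → P v → r u v → r ⊥ ⊤

namespace BoxProd

variable {Ψ : BoxProd m → BoxProd m → Prop}

lemma leMod_of_step_lt (simple : m.IsStronglySimple) (hΨ : LatCon (BoxProd m) Ψ)
    (hΨθ : ∀ y y', Ψ (const m y) (const m y') ↔ θ y y') {c b : C} (hcb : c ≤ b) {u v : S}
    (huv : u < v) (hu : m.AdmitsStep c b u) (hv : m.AdmitsStep c b v)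
    (h : Ψ (step m c b u) (step m c b v)) : θ c b := by
  have partialCon : m.IsPartialCon (fun u v => Ψ (step m c b u) (step m c b v))
      (m.AdmitsStep c b) :=
    { equivalence := ⟨fun u => hΨ.refl _, hΨ.symm, hΨ.trans⟩
      of_threshold_eq_bot := admitsStep_of_threshold_eq_bot
      sup w h := by simpa only [step_sup_tmul] using hΨ.sup h (hΨ.refl (tmul m w b))
      inf {u v w} hu hv hw h := by
        simpa only [step_inf hcb hu hw, step_inf hcb hv hw] using
          hΨ.inf h (hΨ.refl (step m c b w)) }
  have bot_top := simple partialCon huv hu hv h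
  have step_bot : step m c b ⊥ = const m c := by rw [step, tmul_bot_left, bot_sup_eq]
  have step_top : step m c b ⊤ = const m b := sup_eq_left.2 (tmul_mono le_rfl hcb)
  rwa [step_bot, step_top, hΨθ] at bot_top

lemma tmul_inf_le_step {K : BoxProd m} {s d : S} {b : C} {q : S × C} (hK : ∀ p ∈ K, InBox q p)
    (hd : q.1 ≤ d) (hadm : m.AdmitsStep (b ⊓ q.2) b d) :
    tmul m s b ⊓ K ≤ step m (b ⊓ q.2) b d := by
  rintro ⟨t, w⟩ ⟨hs, hwK⟩
  refine (mem_step inf_le_left hadm).2 ((mem_tmul.1 hs).2.imp_right fun hwb => ⟨hwb, ?_⟩)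
  exact (hK _ hwK).imp (fun ht => ht.trans hd) (le_inf hwb)

lemma leMod_snd_of_leMod_tmul (sep : m.IsSeparating) (simple : m.IsStronglySimple)
    (hΨ : LatCon (BoxProd m) Ψ) (hΨθ : ∀ y y', Ψ (const m y) (const m y') ↔ θ y y')
    {K : BoxProd m} {s : S} {b : C} {q : S × C} (hq : m.Admits q) (hK : ∀ p ∈ K, InBox q p)
    (hs : ¬ s ≤ q.1) (h : LeMod Ψ (tmul m s b) K) : LeMod θ b q.2 := by
  have step_rel {p u v : S} (hp : p ≤ s) (hu : tmul m p b ⊓ K ≤ step m (b ⊓ q.2) b u)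
      (hv : u ⊔ p = v) : Ψ (step m (b ⊓ q.2) b u) (step m (b ⊓ q.2) b v) := by
    have hpK : Ψ (tmul m p b ⊓ K) (tmul m p b) :=
      hΨ.leMod_trans (hΨ.leMod_of_le (tmul_mono hp le_rfl)) h
    have := hΨ.sup (hΨ.refl (step m (b ⊓ q.2) b u)) hpK
    rwa [sup_eq_left.2 hu, step_sup_tmul, hv] at this
  rcases sep hs with ⟨p, hps, hp, hpq⟩ | ⟨d, hd, hqd, hd_ne_top, hsd⟩
  · have hp := admitsStep_of_threshold_eq_bot (c := b ⊓ q.2) (b := b) hp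
    have hα : m.AdmitsStep (b ⊓ q.2) b q.1 := inf_le_inf_left b (sup_le inf_le_right hq)
    have lower : tmul m p b ⊓ K ≤ step m (b ⊓ q.2) b (p ⊓ q.1) := by
      rw [← step_inf inf_le_left hp hα]
      exact le_inf (inf_le_left.trans le_sup_left) (tmul_inf_le_step hK le_rfl hα)
    exact leMod_of_step_lt simple hΨ hΨθ inf_le_left (inf_lt_left.2 hpq) (admitsStep_inf hp hα) hp
      (step_rel hps lower (sup_eq_right.2 inf_le_left))
  · have hd := admitsStep_of_threshold_eq_bot (c := b ⊓ q.2) (b := b) hd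
    exact leMod_of_step_lt simple hΨ hΨθ inf_le_left (lt_top_iff_ne_top.2 hd_ne_top) hd
      (admitsStep_of_threshold_eq_bot m.threshold_top)
      (step_rel le_rfl (tmul_inf_le_step hK hqd hd) (by rw [sup_comm, hsd]))

lemma leCon_of_leMod (sep : m.IsSeparating) (simple : m.IsStronglySimple) (hθ : LatCon C θ)
    (hΨ : LatCon (BoxProd m) Ψ) (hΨθ : ∀ y y', Ψ (const m y) (const m y') ↔ θ y y')
    {H K : BoxProd m} (h : LeMod Ψ H K) : LeCon θ H K := fun _ _ hz =>
  exists_lowering hθ fun _ hq hK => or_iff_not_imp_left.2 fun hs =>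
    leMod_snd_of_leMod_tmul sep simple hΨ hΨθ hq hK hs
      (hΨ.leMod_trans (hΨ.leMod_of_le (tmul_le.2 hz)) h)

theorem cpEmb_const [Nontrivial S] (sep : m.IsSeparating) (simple : m.IsStronglySimple) :
    CPEmb C (BoxProd m) (const m) := by
  refine ⟨const_injective, const_sup, const_inf, fun θ hθ =>
    ⟨BoxCon θ, ⟨hθ.boxCon, fun _ _ => boxCon_const hθ⟩, fun Ψ ⟨hΨ, hΨθ⟩ => ?_⟩⟩
  have leMod_iff {H K : BoxProd m} : LeMod Ψ H K ↔ LeCon θ H K :=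
    ⟨leCon_of_leMod sep simple hθ hΨ hΨθ, leMod_of_leCon hΨ hΨθ⟩
  funext H K
  rw [hΨ.iff_leMod, leMod_iff, leMod_iff, BoxCon]

lemma le_of_tmul_le_tmul {s t : S} (hs : s ≠ ⊥) {y z : C} (h : tmul m s y ≤ tmul m t z) : y ≤ z :=
  (mem_tmul.1 (tmul_le.1 h)).2.resolve_left hs

lemma tmul_right_injective {s : S} (hs : s ≠ ⊥) : Function.Injective (tmul m s) := fun _ _ h =>
  le_antisymm (le_of_tmul_le_tmul hs h.le) (le_of_tmul_le_tmul hs h.ge)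

lemma tmul_inf_right (s : S) (z w : C) : tmul m s (z ⊓ w) = tmul m s z ⊓ tmul m s w :=
  le_antisymm (le_inf (tmul_mono le_rfl inf_le_left) (tmul_mono le_rfl inf_le_right))
    ((inf_le_inf_left _ (tmul_le_const s w)).trans (tmul_inf_const s z w).le)

theorem cpEmb_tmul (sep : m.IsSeparating) (simple : m.IsStronglySimple) {s : S} (hs : s ≠ ⊥) :
    CPEmb C (BoxProd m) (tmul m s) := by
  have : Nontrivial S := ⟨s, ⊥, hs⟩
  refine ⟨tmul_right_injective hs, tmul_sup_right s, tmul_inf_right s, fun θ hθ =>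
    ⟨BoxCon θ, ⟨hθ.boxCon, fun _ _ => boxCon_tmul hθ hs⟩, fun Ψ ⟨hΨ, hΨθ⟩ => ?_⟩⟩
  obtain ⟨-, -, -, ext⟩ := cpEmb_const sep simple
  have hΨ_const := hΨ.comap (const_sup (m := m)) const_inf
  have Ψ_eq : Ψ = BoxCon fun y y' => Ψ (const m y) (const m y') :=
    (ext _ hΨ_const).unique ⟨hΨ, fun _ _ => Iff.rfl⟩
      ⟨hΨ_const.boxCon, fun _ _ => boxCon_const hΨ_const⟩
  have Ψ_const : (fun y y' => Ψ (const m y) (const m y')) = θ := by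
    funext y y'
    rw [← boxCon_tmul (m := m) hΨ_const hs, ← Ψ_eq, hΨθ]
  rw [Ψ_eq, Ψ_const]

end BoxProd

end BoxCongruence

/-! ### The frame -/

/-- The skeleton of the frame: a copy of `A`, further atoms, and a chain lying above all of `A`.
Atoms and chain are indexed by `J`, the chain with a further least element; the atom `j` lies below
the chain element `k` exactly if `j ≤ k`. -/
inductive Skeleton (A J : Type*) : Type _
  | elt (x : A) : Skeleton A J
  | atom (j : J) : Skeleton A J
  | chain (k : WithBot J) : Skeleton A J

namespace Skeleton

variable {A J : Type*} [Lattice A] [OrderBot A] [LinearOrder J]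

instance : LE (Skeleton A J) where
  le
    | elt x, elt y => x ≤ y
    | elt x, atom _ => x = ⊥
    | elt _, chain _ => True
    | atom i, atom j => i = j
    | atom j, chain k => j ≤ k
    | chain k, chain l => k ≤ l
    | _, _ => False

@[simp] lemma elt_le_elt {x y : A} : (elt x : Skeleton A J) ≤ elt y ↔ x ≤ y := Iff.rfl

@[simp] lemma elt_le_atom {x : A} {j : J} : elt x ≤ atom j ↔ x = ⊥ := Iff.rfl

@[simp] lemma elt_le_chain (x : A) (k : WithBot J) : elt x ≤ chain k := trivial

@[simp] lemma not_atom_le_elt {x : A} {j : J} : ¬ atom j ≤ elt x := id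

@[simp] lemma atom_le_atom {i j : J} : (atom i : Skeleton A J) ≤ atom j ↔ i = j := Iff.rfl

@[simp] lemma atom_le_chain {j : J} {k : WithBot J} :
    (atom j : Skeleton A J) ≤ chain k ↔ j ≤ k := Iff.rfl

@[simp] lemma not_chain_le_elt {x : A} {k : WithBot J} : ¬ chain k ≤ elt x := id

@[simp] lemma not_chain_le_atom {j : J} {k : WithBot J} :
    ¬ (chain k : Skeleton A J) ≤ atom j := id

@[simp] lemma chain_le_chain {k l : WithBot J} :
    (chain k : Skeleton A J) ≤ chain l ↔ k ≤ l := Iff.rfl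

instance : PartialOrder (Skeleton A J) where
  le_refl u := by cases u <;> simp
  le_trans u v w huv hvw := by
    cases u <;> cases v <;> cases w <;> simp_all <;> grind [le_bot_iff]
  le_antisymm u v huv hvu := by cases u <;> cases v <;> simp_all <;> grind

open scoped Classical in
noncomputable instance : Lattice (Skeleton A J) where
  sup
    | elt x, elt y => elt (x ⊔ y)
    | elt x, atom j => if x = ⊥ then atom j else chain j
    | elt _, chain k => chain k
    | atom j, elt x => if x = ⊥ then atom j else chain j
    | atom i, atom j => if i = j then atom i else chain (i ⊔ j : J)
    | atom j, chain k => chain (j ⊔ k)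
    | chain k, elt _ => chain k
    | chain k, atom j => chain (j ⊔ k)
    | chain k, chain l => chain (k ⊔ l)
  inf
    | elt x, elt y => elt (x ⊓ y)
    | elt _, atom _ => elt ⊥
    | elt x, chain _ => elt x
    | atom _, elt _ => elt ⊥
    | atom i, atom j => if i = j then atom i else elt ⊥
    | atom j, chain k => if j ≤ k then atom j else elt ⊥
    | chain _, elt x => elt x
    | chain k, atom j => if j ≤ k then atom j else elt ⊥
    | chain k, chain l => chain (k ⊓ l)
  le_sup_left u v := by cases u <;> cases v <;> dsimp only <;> (try split_ifs) <;> simp_all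
  le_sup_right u v := by cases u <;> cases v <;> dsimp only <;> (try split_ifs) <;> simp_all
  sup_le u v w huv hvw := by
    cases u <;> cases v <;> cases w <;> dsimp only <;> (try split_ifs) <;> simp_all
  inf_le_left u v := by cases u <;> cases v <;> dsimp only <;> (try split_ifs) <;> simp_all
  inf_le_right u v := by cases u <;> cases v <;> dsimp only <;> (try split_ifs) <;> simp_all
  le_inf u v w huv hvw := by
    cases u <;> cases v <;> cases w <;> dsimp only <;> (try split_ifs) <;> simp_all; grind

instance : OrderBot (Skeleton A J) where
  bot := elt ⊥
  bot_le u := by cases u <;> simp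

lemma bot_eq : (⊥ : Skeleton A J) = elt ⊥ := rfl

lemma atom_inf_atom {i j : J} (h : i ≠ j) : (atom i ⊓ atom j : Skeleton A J) = ⊥ := if_neg h

lemma chain_inf_atom {k : WithBot J} {j : J} (h : k < j) :
    (chain k ⊓ atom j : Skeleton A J) = ⊥ := if_neg (not_le.2 h)

lemma exists_inf_atom_eq_bot [Nonempty J] [NoMaxOrder J] (l : Skeleton A J) :
    ∃ j, l ⊓ atom j = ⊥ := by
  rcases l with x | i | k
  · exact ⟨Classical.arbitrary J, rfl⟩
  · obtain ⟨j, hj⟩ := exists_gt i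
    exact ⟨j, atom_inf_atom hj.ne⟩
  · induction k with
    | bot => exact ⟨Classical.arbitrary J, chain_inf_atom (WithBot.bot_lt_coe _)⟩
    | coe k =>
      obtain ⟨j, hj⟩ := exists_gt k
      exact ⟨j, chain_inf_atom (WithBot.coe_lt_coe.2 hj)⟩

lemma eq_elt_or_exists_inf_eq_bot [Nontrivial A] {l l' : Skeleton A J} (h : l < l') :
    (∃ x, l = elt x) ∨ ∃ w ≤ l', w ≠ ⊥ ∧ l ⊓ w = ⊥ := by
  rcases l with x | i | k
  · exact Or.inl ⟨x, rfl⟩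
  · obtain ⟨x, hx⟩ := exists_ne (⊥ : A)
    rcases l' with y | j | k'
    · exact absurd h.le not_atom_le_elt
    · exact absurd (atom_le_atom.1 h.le ▸ h) (lt_irrefl _)
    · exact Or.inr ⟨elt x, elt_le_chain x k', by simpa [bot_eq] using hx, rfl⟩
  · rcases l' with y | j | k'
    · exact absurd h.le not_chain_le_elt
    · exact absurd h.le not_chain_le_atom
    · have hk : k < k' := lt_of_le_not_ge h.le h.not_ge
      obtain ⟨j, rfl⟩ := WithBot.ne_bot_iff_exists.1 (bot_le.trans_lt hk).ne'
      exact Or.inr ⟨atom j, by simp, by simp [bot_eq], chain_inf_atom hk⟩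

end Skeleton

/-- The lattice `Λ` with a new top element and, for each `l` with `Q l`, a coatom `cap l` whose
only lower bounds besides itself are the elements of `Λ` below `l`. -/
inductive Capped {Λ : Type*} (Q : Λ → Prop) : Type _
  | base (l : Λ) : Capped Q
  | cap (l : Λ) (h : Q l) : Capped Q
  | top : Capped Q

namespace Capped

variable {Λ : Type*} [Lattice Λ] {Q : Λ → Prop}

instance : LE (Capped Q) where
  le
    | _, top => True
    | base l, base l' => l ≤ l'
    | base l, cap l' _ => l ≤ l'
    | cap l _, cap l' _ => l = l'
    | _, _ => False

@[simp] lemma le_top' (u : Capped Q) : u ≤ top := by cases u <;> trivial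

@[simp] lemma base_le_base {l l' : Λ} : (base l : Capped Q) ≤ base l' ↔ l ≤ l' := Iff.rfl

@[simp] lemma base_le_cap {l l' : Λ} {h : Q l'} : base l ≤ cap l' h ↔ l ≤ l' := Iff.rfl

@[simp] lemma not_cap_le_base {l l' : Λ} {h : Q l} : ¬ cap l h ≤ base l' := id

@[simp] lemma cap_le_cap {l l' : Λ} {h : Q l} {h' : Q l'} : cap l h ≤ cap l' h' ↔ l = l' :=
  Iff.rfl

@[simp] lemma not_top_le_base {l : Λ} : ¬ (top : Capped Q) ≤ base l := id

@[simp] lemma not_top_le_cap {l : Λ} {h : Q l} : ¬ top ≤ cap l h := id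

instance : PartialOrder (Capped Q) where
  le_refl u := by cases u <;> simp
  le_trans u v w huv hvw := by
    cases u <;> cases v <;> cases w <;> simp_all <;> grind
  le_antisymm u v huv hvu := by cases u <;> cases v <;> simp_all; grind

open scoped Classical in
noncomputable instance : Lattice (Capped Q) where
  sup
    | base l, base l' => base (l ⊔ l')
    | base l, cap l' h => if l ≤ l' then cap l' h else top
    | cap l h, base l' => if l' ≤ l then cap l h else top
    | cap l h, cap l' _ => if l = l' then cap l h else top
    | top, _ => top
    | _, top => top
  inf
    | base l, base l' => base (l ⊓ l')
    | base l, cap l' _ => base (l ⊓ l')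
    | cap l _, base l' => base (l ⊓ l')
    | cap l h, cap l' _ => if l = l' then cap l h else base (l ⊓ l')
    | top, u => u
    | u, top => u
  le_sup_left u v := by cases u <;> cases v <;> dsimp only <;> (try split_ifs) <;> simp_all
  le_sup_right u v := by cases u <;> cases v <;> dsimp only <;> (try split_ifs) <;> simp_all
  sup_le u v w huv hvw := by
    cases u <;> cases v <;> cases w <;> dsimp only <;> (try split_ifs) <;> simp_all
  inf_le_left u v := by cases u <;> cases v <;> dsimp only <;> (try split_ifs) <;> simp_all
  inf_le_right u v := by cases u <;> cases v <;> dsimp only <;> (try split_ifs) <;> simp_all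
  le_inf u v w huv hvw := by
    cases u <;> cases v <;> cases w <;> dsimp only <;> (try split_ifs) <;> simp_all

instance : OrderTop (Capped Q) where
  top := top
  le_top := le_top'

instance [OrderBot Λ] : BoundedOrder (Capped Q) where
  bot := base ⊥
  bot_le u := by cases u <;> simp

instance [OrderBot Λ] : Nontrivial (Capped Q) := ⟨⊥, ⊤, by rintro ⟨⟩⟩

lemma base_inf_base (l l' : Λ) : (base l ⊓ base l' : Capped Q) = base (l ⊓ l') := rfl

lemma base_ne_top (l : Λ) : (base l : Capped Q) ≠ ⊤ := by rintro ⟨⟩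

lemma cap_ne_top (l : Λ) (h : Q l) : cap l h ≠ ⊤ := by rintro ⟨⟩

lemma cap_ne_bot [OrderBot Λ] (l : Λ) (h : Q l) : cap l h ≠ ⊥ := by rintro ⟨⟩

lemma cap_inf_cap {l l' : Λ} (h : Q l) (h' : Q l') (hne : l ≠ l') :
    cap l h ⊓ cap l' h' = base (l ⊓ l') := if_neg hne

lemma cap_sup_cap {l l' : Λ} (h : Q l) (h' : Q l') (hne : l ≠ l') : cap l h ⊔ cap l' h' = ⊤ :=
  if_neg hne

lemma cap_sup_base {l l' : Λ} (h : Q l) (hl : ¬ l' ≤ l) : cap l h ⊔ base l' = ⊤ := if_neg hl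

lemma eq_top_of_cap_lt {l : Λ} {h : Q l} {v : Capped Q} (hv : cap l h < v) : v = ⊤ := by
  rcases v with l' | ⟨l', h'⟩ | _
  · exact absurd hv.le not_cap_le_base
  · exact absurd (cap_le_cap.2 (cap_le_cap.1 hv.le).symm) hv.not_ge
  · rfl

end Capped

/-- The elements of the skeleton that receive a coatom. -/
def HasCap {A J : Type*} (l : Skeleton A J) : Prop := ∀ k, l ≠ .chain k

lemma HasCap.not_chain_le {A J : Type*} [Lattice A] [OrderBot A] [LinearOrder J]
    {l : Skeleton A J} (hl : HasCap l) (k : WithBot J) : ¬ .chain k ≤ l := by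
  rcases l with x | j | k'
  · exact Skeleton.not_chain_le_elt
  · exact Skeleton.not_chain_le_atom
  · exact absurd rfl (hl k')

/-- The skeleton with a coatom above each `elt x` and each `atom j`, and a top element: the bounded
lattice used as first factor of the box products. -/
abbrev Frame (A J : Type*) := Capped (@HasCap A J)

namespace Frame

variable {A J : Type*}

/-- The copy of `A` in the frame. -/
abbrev elt (x : A) : Frame A J := .base (.elt x)

/-- The atom with index `j`. -/
abbrev atom (j : J) : Frame A J := .base (.atom j)

/-- The chain element with index `k`. -/
abbrev chain (k : WithBot J) : Frame A J := .base (.chain k)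

/-- The coatom over `elt x`. -/
abbrev eltCap (x : A) : Frame A J := .cap (.elt x) nofun

/-- The coatom over `atom j`. -/
abbrev atomCap (j : J) : Frame A J := .cap (.atom j) nofun

variable [Lattice A] [OrderBot A] [LinearOrder J]

@[elab_as_elim]
lemma cases {P : Frame A J → Prop} (elt : ∀ x, P (elt x)) (atom : ∀ j, P (atom j))
    (chain : ∀ k, P (chain k)) (eltCap : ∀ x, P (eltCap x)) (atomCap : ∀ j, P (atomCap j))
    (top : P ⊤) (s : Frame A J) : P s := by
  rcases s with (x | j | k) | ⟨x | j | k, h⟩ | _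
  · exact elt x
  · exact atom j
  · exact chain k
  · exact eltCap x
  · exact atomCap j
  · exact absurd rfl (h k)
  · exact top

variable {C : Type*} [Lattice C] [OrderBot C]

/-- The marking with threshold `t j` at the coatom over `atom j`, and `⊥` everywhere else. -/
def marking (t : J → C) : Marking (Frame A J) C where
  threshold
    | .cap (.atom j) _ => t j
    | _ => ⊥
  threshold_bot := rfl
  threshold_top := rfl
  eq_top_of_lt {u v} huv hu := by
    rcases u with l | ⟨l, h⟩ | _
    · exact absurd rfl hu
    · exact Capped.eq_top_of_cap_lt huv
    · exact absurd rfl hu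

variable {t : J → C}

@[simp] lemma threshold_base (l : Skeleton A J) : (marking t).threshold (.base l) = ⊥ := rfl

@[simp] lemma threshold_eltCap (x : A) :
    (marking t).threshold (eltCap x : Frame A J) = ⊥ := rfl

lemma eltCap_sup_base {x : A} {l : Skeleton A J} (h : ¬ l ≤ .elt x) :
    (eltCap x ⊔ .base l : Frame A J) = ⊤ := Capped.cap_sup_base _ h

lemma atomCap_sup_base {j : J} {l : Skeleton A J} (h : ¬ l ≤ .atom j) :
    (atomCap j ⊔ .base l : Frame A J) = ⊤ := Capped.cap_sup_base _ h

lemma eltCap_inf_atomCap (x : A) (j : J) : (eltCap x ⊓ atomCap j : Frame A J) = ⊥ :=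
  Capped.cap_inf_cap _ _ nofun

lemma atomCap_inf_atomCap {i j : J} (h : i ≠ j) : (atomCap i ⊓ atomCap j : Frame A J) = ⊥ :=
  (Capped.cap_inf_cap _ _ (by simpa using h)).trans
    (congrArg Capped.base (Skeleton.atom_inf_atom h))

lemma atomCap_sup_atomCap {i j : J} (h : i ≠ j) : (atomCap i ⊔ atomCap j : Frame A J) = ⊤ :=
  Capped.cap_sup_cap _ _ (by simpa using h)

lemma eq_atomCap_of_threshold_ne_bot {s : Frame A J} (h : (marking t).threshold s ≠ ⊥) :
    ∃ j, s = atomCap j := by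
  induction s using cases with
  | atomCap j => exact ⟨j, rfl⟩
  | _ => exact absurd rfl h

lemma isSeparating : (marking t : Marking (Frame A J) C).IsSeparating := by
  intro s α hs
  by_cases hthr : (marking t).threshold s = ⊥
  · exact Or.inl ⟨s, le_rfl, hthr, hs⟩
  obtain ⟨j, rfl⟩ := eq_atomCap_of_threshold_ne_bot hthr
  by_cases hj : atom j ≤ α
  · right
    have sup_chain (k : WithBot J) : (atomCap j ⊔ chain k : Frame A J) = ⊤ :=
      atomCap_sup_base Skeleton.not_chain_le_atom
    induction α using cases with
    | elt x => exact absurd (Capped.base_le_base.1 hj) Skeleton.not_atom_le_elt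
    | atom i =>
      obtain rfl : j = i := hj
      exact ⟨chain j, rfl, by simp, Capped.base_ne_top _, sup_chain _⟩
    | chain k => exact ⟨chain k, rfl, le_rfl, Capped.base_ne_top _, sup_chain k⟩
    | eltCap x => exact absurd (Capped.base_le_cap.1 hj) Skeleton.not_atom_le_elt
    | atomCap i =>
      obtain rfl : j = i := hj
      exact absurd le_rfl hs
    | top => exact absurd le_top hs
  · exact Or.inl ⟨atom j, Capped.base_le_cap.2 le_rfl, rfl, hj⟩

section Simplicity

variable {r : Frame A J → Frame A J → Prop} {P : Frame A J → Prop}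

lemma bot_rel_top_of_bot_rel_base (hr : (marking t).IsPartialCon r P)
    (ht : ∃ i j, i ≠ j ∧ t i = ⊥ ∧ t j = ⊥) {l : Skeleton A J} (hl : l ≠ ⊥)
    (h : r ⊥ (.base l)) : r ⊥ ⊤ := by
  obtain ⟨n, hn, hln⟩ : ∃ n, t n = ⊥ ∧ ¬ l ≤ .atom n := by
    obtain ⟨i, j, hij, hi, hj⟩ := ht
    by_contra! hcon
    have := le_inf (hcon i hi) (hcon j hj)
    rw [Skeleton.atom_inf_atom hij, le_bot_iff] at this
    exact hl this
  have eltCap_top : r (eltCap ⊥) ⊤ := by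
    have := hr.sup (eltCap ⊥) h
    rwa [bot_sup_eq, sup_comm, eltCap_sup_base (mt le_bot_iff.1 hl)] at this
  have bot_atomCap : r ⊥ (atomCap n) := by
    have := hr.inf (hr.of_threshold_eq_bot rfl) (hr.of_threshold_eq_bot rfl)
      (hr.of_threshold_eq_bot (u := atomCap n) hn) eltCap_top
    rwa [eltCap_inf_atomCap, top_inf_eq] at this
  have atomCap_top : r (atomCap n) ⊤ := by
    have := hr.sup (atomCap n) h
    rwa [bot_sup_eq, sup_comm, atomCap_sup_base hln] at this
  exact hr.equivalence.trans bot_atomCap atomCap_top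

lemma bot_rel_top_of_rel_top [Nonempty J] [NoMaxOrder J] (hr : (marking t).IsPartialCon r P)
    (ht : ∃ i j, i ≠ j ∧ t i = ⊥ ∧ t j = ⊥) {u : Frame A J} (hu : u ≠ ⊤) (hPu : P u)
    (h : r u ⊤) : r ⊥ ⊤ := by
  obtain ⟨n, hn⟩ : ∃ j, u ⊓ atom j = ⊥ := by
    rcases u with l | ⟨l, hl⟩ | _
    · exact (Skeleton.exists_inf_atom_eq_bot l).imp fun _ => congrArg Capped.base
    · exact (Skeleton.exists_inf_atom_eq_bot l).imp fun _ => congrArg Capped.base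
    · exact absurd rfl hu
  have := hr.inf hPu (hr.of_threshold_eq_bot rfl)
    (hr.of_threshold_eq_bot (threshold_base (.atom n))) h
  rw [hn, top_inf_eq] at this
  exact bot_rel_top_of_bot_rel_base hr ht (by simp [Skeleton.bot_eq]) this

lemma bot_rel_top_of_base_rel_base [Nonempty J] [NoMaxOrder J] [Nontrivial A]
    (hr : (marking t).IsPartialCon r P) (ht : ∃ i j, i ≠ j ∧ t i = ⊥ ∧ t j = ⊥)
    {l l' : Skeleton A J} (hll' : l < l') (h : r (.base l) (.base l')) : r ⊥ ⊤ := by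
  have base_mem (l) : P (.base l) := hr.of_threshold_eq_bot (threshold_base l)
  rcases Skeleton.eq_elt_or_exists_inf_eq_bot hll' with ⟨x, rfl⟩ | ⟨w, hw, hw_ne, hlw⟩
  · have := hr.sup (eltCap x) h
    have le_eltCap : (elt x : Frame A J) ≤ eltCap x := Capped.base_le_cap.2 le_rfl
    rw [sup_eq_right.2 le_eltCap, sup_comm, eltCap_sup_base hll'.not_ge] at this
    exact bot_rel_top_of_rel_top hr ht (Capped.cap_ne_top _ _) (hr.of_threshold_eq_bot rfl) this
  · have := hr.inf (base_mem l) (base_mem l') (base_mem w) h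
    rw [Capped.base_inf_base, Capped.base_inf_base, hlw, inf_eq_right.2 hw] at this
    exact bot_rel_top_of_bot_rel_base hr ht hw_ne this

lemma isStronglySimple [Nonempty J] [NoMaxOrder J] [Nontrivial A]
    (ht : ∃ i j, i ≠ j ∧ t i = ⊥ ∧ t j = ⊥) :
    (marking t : Marking (Frame A J) C).IsStronglySimple := by
  intro r P hr u v huv hu _ h
  rcases v with l' | ⟨l', hl'⟩ | _
  · rcases u with l | ⟨l, hl⟩ | _
    · exact bot_rel_top_of_base_rel_base hr ht (lt_of_le_not_ge huv.le huv.not_ge) h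
    · exact absurd huv.le Capped.not_cap_le_base
    · exact absurd huv.le Capped.not_top_le_base
  · rcases u with l | ⟨l, hl⟩ | _
    · have := hr.sup (chain ⊥) h
      rw [Capped.cap_sup_base _ (hl'.not_chain_le ⊥)] at this
      exact bot_rel_top_of_rel_top hr ht (Capped.base_ne_top _) (hr.of_threshold_eq_bot rfl) this
    · cases Capped.eq_top_of_cap_lt huv
    · exact absurd huv.le Capped.not_top_le_cap
  · exact bot_rel_top_of_rel_top hr ht huv.ne hu h

end Simplicity

end Frame

/-! ### Gluing along a filter -/

section Gluing

/-- The retraction of a lattice onto the filter above `x`. -/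
def toIci {K : Type*} [Lattice K] (x k : K) : Set.Ici x := ⟨k ⊔ x, le_sup_right⟩

lemma toIci_coe {K : Type*} [Lattice K] {x : K} (y : Set.Ici x) : toIci x y = y :=
  Subtype.ext (sup_eq_left.2 y.2)

/-- Data for gluing `U` to `K` along the filter above `x`, which `emb` identifies with an ideal of
`U`; `proj` is the upper adjoint of `emb`. -/
structure Gluing {K : Type*} [Lattice K] (x : K) (U : Type*) [Lattice U] where
  emb : Set.Ici x → U
  proj : U → Set.Ici x
  gc : GaloisConnection emb proj
  proj_emb : ∀ y, proj (emb y) = y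
  emb_proj_of_le : ∀ {n y}, n ≤ emb y → emb (proj n) = n

variable {K U : Type*} [Lattice K] [Lattice U] {x : K} {G : Gluing x U}

lemma Gluing.emb_inf_eq (G : Gluing x U) (y : Set.Ici x) (n : U) :
    G.emb y ⊓ n = G.emb (y ⊓ G.proj n) := by
  rw [← G.emb_proj_of_le inf_le_left, G.gc.u_inf, G.proj_emb]

/-- The lattice obtained by gluing `U` to `K`. A glued element `k` of `K` is represented by the pair
`(k, G.emb (toIci x k))` and a glued element `n` of `U` by `(G.proj n, n)`. -/
def Glue (G : Gluing x U) : Type _ :=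
  {u : K × U // G.proj u.2 = toIci x u.1 ∧ (¬ x ≤ u.1 → u.2 = G.emb (toIci x u.1))}

namespace Glue

instance : PartialOrder (Glue G) := Subtype.partialOrder _

/-- The coordinate of a glued element in `K`. -/
def fst (u : Glue G) : K := u.1.1

/-- The coordinate of a glued element in `U`. -/
def snd (u : Glue G) : U := u.1.2

lemma le_def {u v : Glue G} : u ≤ v ↔ u.fst ≤ v.fst ∧ u.snd ≤ v.snd := Iff.rfl

@[ext]
lemma ext {u v : Glue G} (h : u.fst = v.fst) (h' : u.snd = v.snd) : u = v :=
  Subtype.ext (Prod.ext h h')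

lemma proj_snd (u : Glue G) : G.proj u.snd = toIci x u.fst := u.2.1

lemma coe_proj_snd (u : Glue G) : (G.proj u.snd : K) = u.fst ⊔ x := congrArg Subtype.val u.proj_snd

lemma snd_of_not_le {u : Glue G} (h : ¬ x ≤ u.fst) : u.snd = G.emb (toIci x u.fst) := u.2.2 h

/-- The embedding of `K` into the glued lattice. -/
def low (G : Gluing x U) (k : K) : Glue G :=
  ⟨(k, G.emb (toIci x k)), G.proj_emb _, fun _ => rfl⟩

/-- The embedding of `U` into the glued lattice. -/
def up (G : Gluing x U) (n : U) : Glue G :=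
  ⟨(G.proj n, n), (toIci_coe _).symm, fun h => absurd (G.proj n).2 h⟩

@[simp] lemma fst_low (k : K) : (low G k).fst = k := rfl

@[simp] lemma snd_low (k : K) : (low G k).snd = G.emb (toIci x k) := rfl

@[simp] lemma fst_up (n : U) : (up G n).fst = G.proj n := rfl

@[simp] lemma snd_up (n : U) : (up G n).snd = n := rfl

lemma low_le {k : K} {u : Glue G} : low G k ≤ u ↔ k ≤ u.fst := by
  refine ⟨And.left, fun h => ⟨h, (G.gc _ _).2 ?_⟩⟩
  exact (sup_le_sup_right h x).trans u.coe_proj_snd.ge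

lemma up_le {n : U} {u : Glue G} : up G n ≤ u ↔ x ≤ u.fst ∧ n ≤ u.snd := by
  refine ⟨fun h => ⟨(G.proj n).2.trans h.1, h.2⟩, fun ⟨hx, hn⟩ => ⟨?_, hn⟩⟩
  have : (G.proj n : K) ≤ G.proj u.snd := G.gc.monotone_u hn
  rwa [coe_proj_snd, sup_eq_left.2 hx] at this

lemma eq_up {u : Glue G} (h : x ≤ u.fst) : u = up G u.snd :=
  ext (by rw [fst_up, coe_proj_snd, sup_eq_left.2 h]) rfl

lemma eq_low {u : Glue G} (h : ¬ x ≤ u.fst) : u = low G u.fst := ext rfl (snd_of_not_le h)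

lemma fst_le_proj (u : Glue G) {n : U} (h : u.snd ≤ n) : u.fst ≤ G.proj n :=
  le_sup_left.trans (u.coe_proj_snd.ge.trans (G.gc.monotone_u h))

lemma emb_toIci_le {k : K} {u : Glue G} (h : k ≤ u.fst) : G.emb (toIci x k) ≤ u.snd :=
  (low_le.2 h).2

lemma snd_le_emb_toIci {k : K} {u : Glue G} (hx : ¬ x ≤ u.fst) (h : u.fst ≤ k) :
    u.snd ≤ G.emb (toIci x k) :=
  (snd_of_not_le hx).trans_le (emb_toIci_le (u := low G k) h)

lemma isLUB_up {u v : Glue G} (hx : x ≤ u.fst ⊔ v.fst) :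
    IsLUB {u, v} (up G (u.snd ⊔ v.snd)) := by
  refine ⟨?_, fun w hw => ?_⟩
  · rintro _ (rfl | rfl)
    exacts [⟨fst_le_proj _ le_sup_left, le_sup_left⟩, ⟨fst_le_proj _ le_sup_right, le_sup_right⟩]
  · have hu : u ≤ w := hw (Or.inl rfl)
    have hv : v ≤ w := hw (Or.inr rfl)
    exact up_le.2 ⟨hx.trans (sup_le hu.1 hv.1), sup_le hu.2 hv.2⟩

lemma isLUB_low {u v : Glue G} (hx : ¬ x ≤ u.fst ⊔ v.fst) :
    IsLUB {u, v} (low G (u.fst ⊔ v.fst)) := by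
  refine ⟨?_, fun w hw => low_le.2 (sup_le (hw (Or.inl rfl)).1 (hw (Or.inr rfl)).1)⟩
  rintro _ (rfl | rfl)
  · exact ⟨le_sup_left, snd_le_emb_toIci (fun h => hx (h.trans le_sup_left)) le_sup_left⟩
  · exact ⟨le_sup_right, snd_le_emb_toIci (fun h => hx (h.trans le_sup_right)) le_sup_right⟩

open scoped Classical in
noncomputable instance : Lattice (Glue G) where
  sup u v := if x ≤ u.fst ⊔ v.fst then up G (u.snd ⊔ v.snd) else low G (u.fst ⊔ v.fst)
  le_sup_left u v := by
    split_ifs with hx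
    exacts [(isLUB_up hx).1 (Or.inl rfl), (isLUB_low hx).1 (Or.inl rfl)]
  le_sup_right u v := by
    split_ifs with hx
    exacts [(isLUB_up hx).1 (Or.inr rfl), (isLUB_low hx).1 (Or.inr rfl)]
  sup_le u v w hu hv := by
    have mem_upperBounds : w ∈ upperBounds {u, v} := by rintro _ (rfl | rfl) <;> assumption
    split_ifs with hx
    exacts [(isLUB_up hx).2 mem_upperBounds, (isLUB_low hx).2 mem_upperBounds]
  inf u v := ⟨(u.fst ⊓ v.fst,
      if x ≤ u.fst ⊓ v.fst then u.snd ⊓ v.snd else G.emb (toIci x (u.fst ⊓ v.fst))), by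
    dsimp only
    split_ifs with hx
    · refine ⟨Subtype.ext ?_, fun h => absurd hx h⟩
      have h := le_inf_iff.1 hx
      simp [G.gc.u_inf, coe_proj_snd, toIci, h.1, h.2]
    · exact ⟨G.proj_emb _, fun _ => rfl⟩⟩
  inf_le_left u v := by
    refine ⟨inf_le_left, ?_⟩
    dsimp only
    split_ifs
    exacts [inf_le_left, emb_toIci_le inf_le_left]
  inf_le_right u v := by
    refine ⟨inf_le_right, ?_⟩
    dsimp only
    split_ifs
    exacts [inf_le_right, emb_toIci_le inf_le_right]
  le_inf u v w hv hw := by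
    refine ⟨le_inf hv.1 hw.1, ?_⟩
    dsimp only
    split_ifs with hx
    exacts [le_inf hv.2 hw.2,
      snd_le_emb_toIci (fun h => hx (h.trans (le_inf hv.1 hw.1))) (le_inf hv.1 hw.1)]

instance [OrderBot K] : OrderBot (Glue G) where
  bot := low G ⊥
  bot_le _ := low_le.2 bot_le

lemma snd_inf_of_le {u v : Glue G} (h : x ≤ u.fst ⊓ v.fst) : (u ⊓ v).snd = u.snd ⊓ v.snd := if_pos h

lemma sup_of_le {u v : Glue G} (h : x ≤ u.fst ⊔ v.fst) : u ⊔ v = up G (u.snd ⊔ v.snd) := if_pos h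

lemma sup_of_not_le {u v : Glue G} (h : ¬ x ≤ u.fst ⊔ v.fst) : u ⊔ v = low G (u.fst ⊔ v.fst) :=
  if_neg h

lemma low_bot [OrderBot K] : low G ⊥ = ⊥ := rfl

lemma low_injective : Function.Injective (low G) := fun _ _ h => congrArg fst h

lemma low_sup (k l : K) : low G (k ⊔ l) = low G k ⊔ low G l :=
  le_antisymm (low_le.2 (sup_le (low_le.1 le_sup_left) (low_le.1 le_sup_right)))
    (sup_le (low_le.2 le_sup_left) (low_le.2 le_sup_right))

lemma eq_low_of_le_low {u : Glue G} {k : K} (h : u ≤ low G k) : u = low G u.fst :=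
  ext rfl (by rw [snd_low, ← proj_snd]; exact (G.emb_proj_of_le h.2).symm)

lemma inf_low (u : Glue G) (k : K) : u ⊓ low G k = low G (u.fst ⊓ k) :=
  eq_low_of_le_low (k := k) inf_le_right

lemma low_inf (k l : K) : low G (k ⊓ l) = low G k ⊓ low G l := (inf_low (low G k) l).symm

lemma up_sup (n p : U) : up G (n ⊔ p) = up G n ⊔ up G p :=
  (sup_of_le (u := up G n) (v := up G p) ((G.proj n).2.trans le_sup_left)).symm

lemma up_inf (n p : U) : up G (n ⊓ p) = up G n ⊓ up G p :=
  ext (congrArg Subtype.val G.gc.u_inf)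
    (snd_inf_of_le (u := up G n) (v := up G p) (le_inf (G.proj n).2 (G.proj p).2)).symm

lemma up_emb (y : Set.Ici x) : up G (G.emb y) = low G y :=
  ext (congrArg Subtype.val (G.proj_emb y)) (by rw [snd_up, snd_low, toIci_coe])

lemma up_snd (u : Glue G) : up G u.snd = u ⊔ low G x :=
  le_antisymm (up_le.2 ⟨low_le.1 le_sup_right, (le_def.1 le_sup_left).2⟩)
    (sup_le ⟨fst_le_proj u le_rfl, le_rfl⟩ (low_le.2 (G.proj u.snd).2))

lemma snd_sup (u v : Glue G) : (u ⊔ v).snd = u.snd ⊔ v.snd := by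
  have : up G (u ⊔ v).snd = up G (u.snd ⊔ v.snd) := by
    rw [up_sup, up_snd, up_snd, up_snd, sup_sup_distrib_right]
  exact congrArg snd this

section Congruence

variable {θ : K → K → Prop} {Φ : U → U → Prop}

/-- The relation on the glued lattice that is induced by relations on `K` and `U`. -/
def Rel (θ : K → K → Prop) (Φ : U → U → Prop) (u v : Glue G) : Prop :=
  θ u.fst v.fst ∧ Φ u.snd v.snd

lemma rel_proj (hΦ : LatCon U Φ)
    (hΦθ : ∀ y z, Φ (G.emb y) (G.emb z) ↔ θ y z) {n p : U} (h : Φ n p) :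
    θ (G.proj n) (G.proj p) := by
  have := hΦ.inf (hΦ.refl (G.emb (G.proj n ⊔ G.proj p))) h
  rwa [G.emb_inf_eq, G.emb_inf_eq, inf_eq_right.2 le_sup_left, inf_eq_right.2 le_sup_right,
    hΦθ] at this

lemma rel_sup_self (hθ : LatCon K θ) {k l : K} (h : θ k l) (hk : x ≤ k) : θ l (l ⊔ x) := by
  have := hθ.sup h (hθ.refl x)
  rw [sup_eq_left.2 hk] at this
  exact hθ.trans (hθ.symm h) this

variable {u u' v v' : Glue G}

lemma rel_fst_sup_of_le (hθ : LatCon K θ) (hfst : θ (u.fst ⊔ v.fst) (u'.fst ⊔ v'.fst))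
    (hproj : θ (G.proj (u ⊔ v).snd) (G.proj (u' ⊔ v').snd)) (hx : x ≤ u.fst ⊔ v.fst) :
    θ (u ⊔ v).fst (u' ⊔ v').fst := by
  have fst_of_le {u v : Glue G} (hx : x ≤ u.fst ⊔ v.fst) :
      (u ⊔ v).fst = G.proj (u ⊔ v).snd := by rw [sup_of_le hx]; rfl
  rw [fst_of_le hx]
  by_cases hx' : x ≤ u'.fst ⊔ v'.fst
  · rwa [fst_of_le hx']
  · rw [coe_proj_snd (u' ⊔ v'), sup_of_not_le hx', fst_low] at hproj
    rw [sup_of_not_le hx', fst_low]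
    exact hθ.trans hproj (hθ.symm (rel_sup_self hθ hfst hx))

lemma rel_fst_sup (hθ : LatCon K θ) (hΦ : LatCon U Φ)
    (hΦθ : ∀ y z, Φ (G.emb y) (G.emb z) ↔ θ y z) (hu : Rel θ Φ u u') (hv : Rel θ Φ v v') :
    θ (u ⊔ v).fst (u' ⊔ v').fst := by
  have hfst := hθ.sup hu.1 hv.1
  have hproj : θ (G.proj (u ⊔ v).snd) (G.proj (u' ⊔ v').snd) := by
    rw [snd_sup, snd_sup]
    exact rel_proj hΦ hΦθ (hΦ.sup hu.2 hv.2)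
  by_cases hx : x ≤ u.fst ⊔ v.fst
  · exact rel_fst_sup_of_le hθ hfst hproj hx
  by_cases hx' : x ≤ u'.fst ⊔ v'.fst
  · exact hθ.symm (rel_fst_sup_of_le hθ (hθ.symm hfst) (hθ.symm hproj) hx')
  · rwa [sup_of_not_le hx, sup_of_not_le hx']

lemma snd_inf_snd_of_not_le (h : ¬ x ≤ u.fst ⊓ v.fst) :
    u.snd ⊓ v.snd = G.emb (toIci x u.fst ⊓ toIci x v.fst) := by
  rw [le_inf_iff, not_and_or] at h
  rcases h with h | h
  · rw [snd_of_not_le h, G.emb_inf_eq, proj_snd]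
  · rw [snd_of_not_le h, inf_comm, G.emb_inf_eq, proj_snd, inf_comm]

lemma rel_snd_inf_of_le (hθ : LatCon K θ) (hΦ : LatCon U Φ)
    (hΦθ : ∀ y z, Φ (G.emb y) (G.emb z) ↔ θ y z) (hu : Rel θ Φ u u') (hv : Rel θ Φ v v')
    (hx : x ≤ u.fst ⊓ v.fst) : Φ (u ⊓ v).snd (u' ⊓ v').snd := by
  have hinf := hΦ.inf hu.2 hv.2
  rw [snd_inf_of_le hx]
  by_cases hx' : x ≤ u'.fst ⊓ v'.fst
  · rwa [snd_inf_of_le hx']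
  · refine hΦ.trans hinf ?_
    rw [snd_inf_snd_of_not_le hx', snd_of_not_le (u := u' ⊓ v') hx', hΦθ]
    have hu' := rel_sup_self hθ hu.1 (le_inf_iff.1 hx).1
    have hv' := rel_sup_self hθ hv.1 (le_inf_iff.1 hx).2
    exact hθ.trans (hθ.symm (hθ.inf hu' hv')) (rel_sup_self hθ (hθ.inf hu.1 hv.1) hx)

lemma latCon_rel (hθ : LatCon K θ) (hΦ : LatCon U Φ)
    (hΦθ : ∀ y z, Φ (G.emb y) (G.emb z) ↔ θ y z) : LatCon (Glue G) (Rel θ Φ) := by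
  have symm {u v : Glue G} (h : Rel θ Φ u v) : Rel θ Φ v u := ⟨hθ.symm h.1, hΦ.symm h.2⟩
  refine ⟨⟨fun u => ⟨hθ.refl _, hΦ.refl _⟩, symm,
    fun h h' => ⟨hθ.trans h.1 h'.1, hΦ.trans h.2 h'.2⟩⟩, fun u u' v v' hu hv => ⟨⟨?_, ?_⟩, ?_, ?_⟩⟩
  · exact rel_fst_sup hθ hΦ hΦθ hu hv
  · rw [snd_sup, snd_sup]
    exact hΦ.sup hu.2 hv.2
  · exact hθ.inf hu.1 hv.1
  · by_cases hx : x ≤ u.fst ⊓ v.fst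
    · exact rel_snd_inf_of_le hθ hΦ hΦθ hu hv hx
    by_cases hx' : x ≤ u'.fst ⊓ v'.fst
    · exact hΦ.symm (rel_snd_inf_of_le hθ hΦ hΦθ (symm hu) (symm hv) hx')
    · rw [snd_of_not_le (u := u ⊓ v) hx, snd_of_not_le (u := u' ⊓ v') hx', hΦθ]
      exact hθ.sup (hθ.inf hu.1 hv.1) (hθ.refl x)

variable {Ψ : Glue G → Glue G → Prop}

lemma of_rel_of_le (hθ : LatCon K θ) (hΨ : LatCon (Glue G) Ψ)
    (hΨθ : ∀ k l, Ψ (low G k) (low G l) ↔ θ k l) (hΨΦ : ∀ n p, Ψ (up G n) (up G p) ↔ Φ n p)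
    (h : Rel θ Φ u v) (hx : x ≤ u.fst) : Ψ u v := by
  have hup := (hΨΦ _ _).2 h.2
  rw [← eq_up hx] at hup
  by_cases hx' : x ≤ v.fst
  · rwa [← eq_up hx'] at hup
  · refine hΨ.trans hup ?_
    rw [up_snd, eq_low hx', ← low_sup, hΨθ]
    exact hθ.symm (rel_sup_self hθ h.1 hx)

lemma eq_rel (hθ : LatCon K θ) (hΨ : LatCon (Glue G) Ψ)
    (hΨθ : ∀ k l, Ψ (low G k) (low G l) ↔ θ k l) (hΨΦ : ∀ n p, Ψ (up G n) (up G p) ↔ Φ n p) :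
    Ψ = Rel θ Φ := by
  funext u v
  refine propext ⟨fun h => ⟨?_, ?_⟩, fun h => ?_⟩
  · have := hΨ.inf h (hΨ.refl (low G (u.fst ⊔ v.fst)))
    rwa [inf_low, inf_low, hΨθ, inf_eq_left.2 le_sup_left, inf_eq_left.2 le_sup_right] at this
  · rw [← hΨΦ, up_snd, up_snd]
    exact hΨ.sup h (hΨ.refl _)
  · by_cases hx : x ≤ u.fst
    · exact of_rel_of_le hθ hΨ hΨθ hΨΦ h hx
    by_cases hx' : x ≤ v.fst
    · have symm : Rel θ Φ v u := ⟨hθ.symm h.1, (hΨΦ _ _).1 (hΨ.symm ((hΨΦ _ _).2 h.2))⟩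
      exact hΨ.symm (of_rel_of_le hθ hΨ hΨθ hΨΦ symm hx')
    · rw [eq_low hx, eq_low hx', hΨθ]
      exact h.1

theorem cpEmb_low (hG : CPEmb (Set.Ici x) U G.emb) : CPEmb K (Glue G) (low G) := by
  refine ⟨low_injective, low_sup, low_inf, fun θ hθ => ?_⟩
  obtain ⟨-, -, -, ext⟩ := hG
  have restrict : LatCon (Set.Ici x) fun y z => θ y z := hθ.comap (fun _ _ => rfl) fun _ _ => rfl
  obtain ⟨Φ, ⟨hΦ, hΦθ⟩, Φ_unique⟩ := ext _ restrict
  refine ⟨Rel θ Φ, ⟨latCon_rel hθ hΦ hΦθ, fun k l => ⟨And.left, fun h => ⟨h, ?_⟩⟩⟩, ?_⟩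
  · exact (hΦθ _ _).2 (hθ.sup h (hθ.refl x))
  · rintro Ψ ⟨hΨ, hΨθ⟩
    have hΨΦ : (fun n p => Ψ (up G n) (up G p)) = Φ :=
      Φ_unique _ ⟨hΨ.comap up_sup up_inf, fun y z => by simp only [up_emb, hΨθ]⟩
    exact eq_rel hθ hΨ hΨθ fun n p => by rw [← hΨΦ]

end Congruence

end Glue

/-- `x` is a node of the principal ideal of `b`: an element strictly below `b` that is comparable
with all elements below `b`. -/
def IsNode {C : Type*} [Lattice C] (x b : C) : Prop := x < b ∧ ∀ u ≤ b, u ≤ x ∨ x ≤ u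

lemma Glue.isNode_up {n : U} (hproj : G.proj n = ⊥) (hn : n ≠ G.emb ⊥) :
    IsNode (low G x) (up G n) := by
  have fst_up : (up G n).fst = x := congrArg Subtype.val hproj
  refine ⟨lt_of_le_of_ne (low_le.2 fst_up.ge) fun h => hn ?_, fun u hu => ?_⟩
  · have := congrArg snd h
    rw [snd_low, snd_up] at this
    rw [← this]
    exact congrArg _ (Subtype.ext (sup_idem x))
  · refine or_iff_not_imp_right.2 fun hx => ?_
    rw [eq_low (mt low_le.2 hx)]
    exact low_le.2 (hu.1.trans fst_up.le)

lemma Glue.exists_isNode (hU : ∀ n, ∃ p p', G.proj p = ⊥ ∧ p ≠ G.emb ⊥ ∧ G.proj p' = ⊥ ∧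
    p' ≠ G.emb ⊥ ∧ n ≤ p ⊔ p') (u : Glue G) :
    ∃ b b', IsNode (low G x) b ∧ IsNode (low G x) b' ∧ u ≤ b ⊔ b' := by
  obtain ⟨p, p', hp, hp_ne, hp', hp'_ne, hu⟩ := hU u.snd
  refine ⟨up G p, up G p', isNode_up hp hp_ne, isNode_up hp' hp'_ne, ?_⟩
  rw [← up_sup]
  exact ⟨fst_le_proj u hu, hu⟩

end Gluing

/-! ### Nodes -/

/-- `x` is nonzero and a node in principal ideals whose generators join above any given element. -/
def IsSpanningNode {C : Type*} [Lattice C] [OrderBot C] (x : C) : Prop :=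
  x ≠ ⊥ ∧ ∀ u, ∃ b b', IsNode x b ∧ IsNode x b' ∧ u ≤ b ⊔ b'

section OrderIso

variable {C D : Type*} [Lattice C] [Lattice D]

lemma IsNode.map {x b : C} (h : IsNode x b) (γ : C ≃o D) : IsNode (γ x) (γ b) := by
  refine ⟨γ.lt_iff_lt.2 h.1, fun u hu => ?_⟩
  have := h.2 (γ.symm u) (by rwa [γ.symm_apply_le])
  rwa [γ.symm_apply_le, γ.le_symm_apply] at this

lemma IsSpanningNode.map [OrderBot C] [OrderBot D] {x : C} (h : IsSpanningNode x) (γ : C ≃o D) :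
    IsSpanningNode (γ x) := by
  refine ⟨fun hx => h.1 ((map_eq_bot_iff γ).1 hx), fun u => ?_⟩
  obtain ⟨b, b', hb, hb', hu⟩ := h.2 (γ.symm u)
  refine ⟨γ b, γ b', hb.map γ, hb'.map γ, ?_⟩
  rwa [← map_sup, ← γ.symm_apply_le]

end OrderIso

namespace BoxProd

variable {K S : Type*} [Lattice K] [Lattice S] [BoundedOrder S] {x : K}

/-- The gluing of a box product over the filter above `x` along the column of an atom of `S`. -/
noncomputable def columnGluing (m : Marking S (Set.Ici x)) {s : S} (hs : IsAtom s)
    (hm : m.threshold s = ⊥) : Gluing x (BoxProd m) where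
  emb := tmul m s
  proj H := (H.exists_column hs.1).choose
  gc y H := tmul_le.trans ((H.exists_column hs.1).choose_spec y)
  proj_emb y := eq_of_forall_le_iff fun z => by
    rw [← (exists_column _ hs.1).choose_spec, mem_tmul, or_iff_right hs.1]
    exact and_iff_right (Or.inl le_rfl)
  emb_proj_of_le {H y} hH := by
    refine le_antisymm (tmul_le.2 ((H.exists_column hs.1).choose_spec _ |>.2 le_rfl)) ?_
    refine le_def.2 fun ⟨t, z⟩ hz => ?_
    rcases (mem_tmul.1 (le_def.1 hH _ hz)).1 with ht | hz'
    · rcases hs.le_iff.1 ht with rfl | rfl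
      · exact bot_left_mem _ _
      · exact mem_tmul.2 ⟨Or.inl le_rfl, Or.inr (((H.exists_column hs.1).choose_spec z).1 hz)⟩
    · rw [hm, le_bot_iff] at hz'
      exact hz' ▸ bot_right_mem _ _

variable {m : Marking S (Set.Ici x)} {s : S} {hs : IsAtom s} {hm : m.threshold s = ⊥}

lemma columnGluing_proj_tmul {t : S} (hst : ¬ s ≤ t) (ht : m.threshold t = ⊥) (y : Set.Ici x) :
    (columnGluing m hs hm).proj (tmul m t y) = ⊥ := by
  have : (s, (columnGluing m hs hm).proj (tmul m t y)) ∈ tmul m t y :=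
    tmul_le.1 ((columnGluing m hs hm).gc.l_u_le _)
  rw [← le_bot_iff, ← ht]
  exact (mem_tmul.1 this).1.resolve_left hst

lemma columnGluing_exists_proj_eq_bot [Nontrivial (Set.Ici x)] {t t' : S} (ht : m.threshold t = ⊥)
    (ht' : m.threshold t' = ⊥) (hst : ¬ s ≤ t) (hst' : ¬ s ≤ t') (htop : t ⊔ t' = ⊤)
    (ht_bot : t ≠ ⊥) (ht'_bot : t' ≠ ⊥) (H : BoxProd m) :
    let G := columnGluing m hs hm
    ∃ p p', G.proj p = ⊥ ∧ p ≠ G.emb ⊥ ∧ G.proj p' = ⊥ ∧ p' ≠ G.emb ⊥ ∧ H ≤ p ⊔ p' := by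
  obtain ⟨b, hb⟩ := H.exists_le_const
  obtain ⟨y₀, hy₀⟩ := exists_ne (⊥ : Set.Ici x)
  set y := b ⊔ y₀
  have hy : y ≠ ⊥ := fun h => hy₀ (le_bot_iff.1 (h ▸ le_sup_right))
  have ne_emb_bot {r : S} (hr : r ≠ ⊥) : tmul m r y ≠ tmul m s ⊥ := fun h => by
    have := mem_tmul_self (m := m) r y
    rw [h, tmul_bot_right, mem_bot] at this
    exact this.elim hr hy
  refine ⟨tmul m t y, tmul m t' y, columnGluing_proj_tmul hst ht y, ne_emb_bot ht_bot,
    columnGluing_proj_tmul hst' ht' y, ne_emb_bot ht'_bot, ?_⟩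
  rw [← tmul_sup_left, htop]
  exact hb.trans (tmul_mono le_rfl le_sup_left)

end BoxProd

/-- A fixed marking without thresholds, used to produce nodes. -/
noncomputable abbrev gadget (C : Type*) [Lattice C] [OrderBot C] : Marking (Frame Bool ℕ) C :=
  Frame.marking fun _ => ⊥

lemma Frame.isAtom_eltCap_bot {A J : Type*} [Lattice A] [OrderBot A] [LinearOrder J] :
    IsAtom (Frame.eltCap ⊥ : Frame A J) := by
  refine ⟨Capped.cap_ne_bot _ _, fun t ht => ?_⟩
  rcases t with l | ⟨l, hl⟩ | _
  · exact congrArg Capped.base (le_bot_iff.1 (Capped.base_le_cap.1 ht.le))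
  · exact absurd (Capped.eq_top_of_cap_lt ht) (Capped.cap_ne_top _ _)
  · exact absurd ht.le Capped.not_top_le_cap

lemma gadget_isStronglySimple (C : Type*) [Lattice C] [OrderBot C] :
    (gadget C).IsStronglySimple :=
  Frame.isStronglySimple ⟨0, 1, zero_ne_one, rfl, rfl⟩

lemma gadget_exists_isSpanningNode {K : Type*} [Lattice K] [OrderBot K] {x y : K} (hx : x ≠ ⊥)
    (hxy : x < y) :
    IsSpanningNode
      (Glue.low (BoxProd.columnGluing (gadget (Set.Ici x)) Frame.isAtom_eltCap_bot rfl) x) := by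
  have : Nontrivial (Set.Ici x) := ⟨⊥, ⟨y, hxy.le⟩, fun h => hxy.ne (congrArg Subtype.val h)⟩
  have not_le_atomCap (j : ℕ) : ¬ (Frame.eltCap ⊥ : Frame Bool ℕ) ≤ Frame.atomCap j := by
    exact fun h => nomatch Capped.cap_le_cap.1 h
  refine ⟨fun h => hx (Glue.low_injective (h.trans Glue.low_bot.symm)), Glue.exists_isNode <|
    BoxProd.columnGluing_exists_proj_eq_bot (t := Frame.atomCap 0) (t' := Frame.atomCap 1) rfl rfl
      (not_le_atomCap 0) (not_le_atomCap 1) (Frame.atomCap_sup_atomCap zero_ne_one)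
      (Capped.cap_ne_bot _ _) (Capped.cap_ne_bot _ _)⟩

theorem exists_cpEmb_isSpanningNode (C : Type u) [Lattice C] [OrderBot C] [Nontrivial C] :
    ∃ (D : Type u) (_ : Lattice D) (_ : OrderBot D) (e : C → D) (x : D),
      CPEmb C D e ∧ e ⊥ = ⊥ ∧ IsSpanningNode x := by
  obtain ⟨c, hc⟩ := exists_ne (⊥ : C)
  let t : Frame Bool ℕ := Frame.eltCap ⊥
  let x : BoxProd (gadget C) := BoxProd.tmul _ t c
  have not_mem_bot : (t, c) ∉ (⊥ : BoxProd (gadget C)) := fun h =>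
    (BoxProd.mem_bot.1 h).elim (Capped.cap_ne_bot _ _) hc
  have hx : x ≠ ⊥ := fun h => not_mem_bot (h ▸ BoxProd.mem_tmul_self t c)
  have hx_lt : x < BoxProd.const _ c := by
    refine lt_of_le_not_ge (BoxProd.tmul_le_const t c) fun h => ?_
    rcases (BoxProd.mem_tmul.1 (BoxProd.const_le.1 h)).1 with h | h
    · exact absurd h Capped.not_top_le_cap
    · exact hc (le_bot_iff.1 h)
  refine ⟨Glue (BoxProd.columnGluing (gadget (Set.Ici x)) Frame.isAtom_eltCap_bot rfl),
    inferInstance, inferInstance, Glue.low _ ∘ BoxProd.const _, _, CPEmb.comp ?_ ?_, ?_,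
    gadget_exists_isSpanningNode hx hx_lt⟩
  · exact Glue.cpEmb_low (BoxProd.cpEmb_tmul Frame.isSeparating (gadget_isStronglySimple _)
      Frame.isAtom_eltCap_bot.1)
  · exact BoxProd.cpEmb_const Frame.isSeparating (gadget_isStronglySimple _)
  · rw [Function.comp_apply, BoxProd.const_bot, Glue.low_bot]

/-! ### Automorphisms permute the constants -/

open scoped Cardinal

/-- There are `J` many pairwise complementary elements in the interval from `⊥` to `w`. In a box
product over a frame with few elements below each proper element, this distinguishes the
constants. -/
def HasMutualComplements (J : Type*) {L : Type*} [Lattice L] [OrderBot L] (w : L) : Prop :=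
  ∃ u : J → L, ∀ i j, i ≠ j → u i ⊓ u j = ⊥ ∧ u i ⊔ u j = w

lemma HasMutualComplements.map {J L M : Type*} [Lattice L] [OrderBot L] [Lattice M] [OrderBot M]
    {w : L} (h : HasMutualComplements J w) (β : L ≃o M) : HasMutualComplements J (β w) := by
  obtain ⟨u, hu⟩ := h
  refine ⟨fun i => β (u i), fun i j hij => ?_⟩
  rw [← map_inf, ← map_sup, (hu i j hij).1, (hu i j hij).2]
  exact ⟨map_bot β, rfl⟩

/-- The index type `J` is large: multiplying the size of a proper principal ideal of the frame by
the size of `C` does not exhaust it. -/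
def IsLargeIndex (A J C : Type u) [Lattice A] [OrderBot A] [LinearOrder J] : Prop :=
  ∀ α : Frame A J, α ≠ ⊤ → #(Set.Iic α) * #C < #J

namespace IsLargeIndex

variable {A J C : Type u} [Lattice A] [OrderBot A] [LinearOrder J]

lemma exists_forall_notMem [Infinite J] (hJ : IsLargeIndex A J C) {α : Frame A J} (hα : α ≠ ⊤)
    {F : Frame A J → Set J} (hF : ∀ s, #(F s) ≤ #C) :
    ∃ i j, i ≠ j ∧ ∀ s ≤ α, i ∉ F s ∧ j ∉ F s := by
  have card_lt : #(⋃ s : Set.Iic α, F s : Set J) < #J :=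
    (Cardinal.mk_iUnion_le _).trans_lt <|
      (mul_le_mul_right (ciSup_le' fun s : Set.Iic α => hF s) _).trans_lt (hJ α hα)
  have : Infinite ((⋃ s : Set.Iic α, F s)ᶜ : Set J) := by
    rw [← Cardinal.aleph0_le_mk_iff, Cardinal.mk_compl_of_infinite _ card_lt]
    exact Cardinal.aleph0_le_mk J
  obtain ⟨⟨i, hi⟩, ⟨j, hj⟩, hij⟩ := exists_pair_ne ((⋃ s : Set.Iic α, F s)ᶜ : Set J)
  simp only [Set.mem_compl_iff, Set.mem_iUnion, Subtype.exists, Set.mem_Iic, not_exists] at hi hj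
  exact ⟨i, j, fun h => hij (Subtype.ext h), fun s hs => ⟨hi s hs, hj s hs⟩⟩

end IsLargeIndex

namespace BoxProd

variable {A J C : Type u} [Lattice A] [OrderBot A] [LinearOrder J] [Lattice C] [OrderBot C]
variable {t : J → C}

lemma hasMutualComplements_const (e : J ↪ {j // t j = ⊥}) (b : C) :
    HasMutualComplements J (const (Frame.marking t : Marking (Frame A J) C) b) := by
  refine ⟨fun i => tmul _ (Frame.atomCap (e i)) b, fun i j hij => ?_⟩
  have hne : (e i : J) ≠ e j := fun h => hij (e.injective (Subtype.ext h))
  constructor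
  · rw [← tmul_inf_left (e i).2 (e j).2, Frame.atomCap_inf_atomCap hne, tmul_bot_left]
  · rw [← tmul_sup_left, Frame.atomCap_sup_atomCap hne]
    rfl

lemma mk_setOf_exists_mem_le {J C : Type u} {S : Type*} [Lattice S] [BoundedOrder S] [Lattice C]
    [OrderBot C] {m : Marking S C} {u : J → BoxProd m} (hu : ∀ i j, i ≠ j → u i ⊓ u j = ⊥) (s : S) :
    #{i | s ≠ ⊥ ∧ ∃ z ≠ ⊥, (s, z) ∈ u i} ≤ #C := by
  choose φ hφ_ne hφ_mem using fun i : {i | s ≠ ⊥ ∧ ∃ z ≠ ⊥, (s, z) ∈ u i} => i.2.2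
  refine Cardinal.mk_le_of_injective (f := φ) fun i j hij => ?_
  by_contra hne
  have : (s, φ i) ∈ u i ⊓ u j := mem_inf.2 ⟨hφ_mem i, hij ▸ hφ_mem j⟩
  rw [hu i j fun h => hne (Subtype.ext h), mem_bot] at this
  exact this.elim i.2.1 (hφ_ne i)

variable [Infinite J]

lemma le_const_of_hasMutualComplements (hJ : IsLargeIndex A J C)
    {w : BoxProd (Frame.marking t : Marking (Frame A J) C)} (hw : HasMutualComplements J w)
    {q : Frame A J × C} (hq : ∀ p ∈ w, InBox q p) (hq_ne : q.1 ≠ ⊤) : w ≤ const _ q.2 := by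
  obtain ⟨u, hu⟩ := hw
  obtain ⟨i, j, hij, hF⟩ := hJ.exists_forall_notMem hq_ne
    (mk_setOf_exists_mem_le fun i j hij => (hu i j hij).1)
  have le_const {n : J} (hn : u n ≤ w) (h : ∀ s ≤ q.1, ¬ (s ≠ ⊥ ∧ ∃ z ≠ ⊥, (s, z) ∈ u n)) :
      u n ≤ const _ q.2 := by
    refine le_def.2 fun ⟨s, z⟩ hz => mem_const.2 ?_
    rcases hq _ (le_def.1 hn _ hz) with hs | hz'
    · by_contra! hcon
      exact h s hs ⟨hcon.1, z, fun hz_bot => hcon.2 (hz_bot ▸ bot_le), hz⟩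
    · exact Or.inr hz'
  have hw := (hu i j hij).2
  rw [← hw]
  exact sup_le (le_const (hw ▸ le_sup_left) fun s hs => (hF s hs).1)
    (le_const (hw ▸ le_sup_right) fun s hs => (hF s hs).2)

lemma exists_eq_const_of_hasMutualComplements (hJ : IsLargeIndex A J C)
    {w : BoxProd (Frame.marking t : Marking (Frame A J) C)} (hw : HasMutualComplements J w) :
    ∃ b, w = const _ b := by
  obtain ⟨y, hy⟩ := w.exists_column (top_ne_bot (α := Frame A J))
  refine ⟨y, le_antisymm (le_def.2 fun ⟨s, z⟩ hz => ?_) (const_le.2 ((hy y).2 le_rfl))⟩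
  rw [mem_const, or_iff_not_imp_left, ← hy]
  intro hs
  by_contra hcon
  obtain ⟨q, -, hq, hqz⟩ := exists_separating_box hcon
  simp only [InBox, not_or] at hqz
  have hw_le := le_const_of_hasMutualComplements hJ hw hq fun h => hqz.1 h.ge
  exact hqz.2 ((mem_const.1 (le_def.1 hw_le _ hz)).resolve_left hs)

end BoxProd

/-- The automorphism `β` of a box product maps constants as the automorphism `γ` of `C` does. -/
def LiesOver {S C : Type*} [Lattice S] [BoundedOrder S] [Lattice C] [OrderBot C] {m : Marking S C}
    (β : BoxProd m ≃o BoxProd m) (γ : C ≃o C) : Prop :=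
  ∀ y, β (BoxProd.const m y) = BoxProd.const m (γ y)

lemma LiesOver.symm {S C : Type*} [Lattice S] [BoundedOrder S] [Lattice C] [OrderBot C]
    {m : Marking S C} {β : BoxProd m ≃o BoxProd m} {γ : C ≃o C} (h : LiesOver β γ) :
    LiesOver β.symm γ.symm := fun y => by
  rw [β.symm_apply_eq, h, γ.apply_symm_apply]

lemma exists_liesOver {A J C : Type u} [Lattice A] [OrderBot A] [LinearOrder J] [Infinite J]
    [Lattice C] [OrderBot C] {t : J → C} (hJ : IsLargeIndex A J C) (e : J ↪ {j // t j = ⊥})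
    (β : BoxProd (Frame.marking t : Marking (Frame A J) C) ≃o
      BoxProd (Frame.marking t : Marking (Frame A J) C)) :
    ∃ γ : C ≃o C, LiesOver β γ := by
  have map_const (β : BoxProd (Frame.marking t : Marking (Frame A J) C) ≃o BoxProd _) (y : C) :
      ∃ y', β (BoxProd.const _ y) = BoxProd.const (Frame.marking t) y' :=
    BoxProd.exists_eq_const_of_hasMutualComplements hJ
      ((BoxProd.hasMutualComplements_const e y).map β)
  choose g hg using map_const β
  choose g' hg' using map_const β.symm
  refine ⟨⟨⟨g, g', fun y => ?_, fun y => ?_⟩, fun {y z} => ?_⟩, hg⟩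
  · apply BoxProd.const_injective (m := (Frame.marking t : Marking (Frame A J) C))
    rw [← hg', ← hg, β.symm_apply_apply]
  · apply BoxProd.const_injective (m := (Frame.marking t : Marking (Frame A J) C))
    rw [← hg, ← hg', β.apply_symm_apply]
  · rw [← BoxProd.const_le_const (m := (Frame.marking t : Marking (Frame A J) C)) (z := y),
      ← β.le_iff_le, hg, hg, BoxProd.const_le_const]
    rfl

/-! ### Automorphisms act on the pure tensors -/

namespace LiesOver

open BoxProd

variable {S C : Type*} [Lattice S] [BoundedOrder S] [Lattice C] [OrderBot C]
variable {m : Marking S C} {β : BoxProd m ≃o BoxProd m} {γ : C ≃o C} {x b : C} {s s' : S}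

lemma eq_bot_or_le_of_mem (hβ : LiesOver β γ) {r : S} {w : C} (h : (r, w) ∈ β (tmul m s b)) :
    r = ⊥ ∨ w ≤ γ b := by
  rw [← mem_const, ← hβ b]
  exact le_def.1 (β.monotone (tmul_le_const s b)) _ h

lemma mem_map_tmul_of_mem (hβ : LiesOver β γ) (hxb : x ≤ b) {r : S} {w : C} (hw : w ≤ γ x)
    (h : (r, w) ∈ β (tmul m s b)) : (r, w) ∈ β (tmul m s x) := by
  rw [← inf_eq_right.2 hxb, ← tmul_inf_const, map_inf, hβ]
  exact mem_inf.2 ⟨h, mem_const.2 (Or.inr hw)⟩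

lemma exists_row_bound (hβ : LiesOver β γ) (x : C) (s : S) :
    ∃ s', tmul m s' (γ x) ≤ β (tmul m s x) ∧
      ∀ b, IsNode x b → β (tmul m s b) ≤ tmul m s' (γ b) ⊔ const m (γ x) := by
  obtain ⟨s', hs'⟩ := (β (tmul m s x)).exists_row (γ x)
  refine ⟨s', tmul_le.2 ((hs' s').2 le_rfl), fun b hb => le_def.2 fun ⟨r, w⟩ hw => ?_⟩
  rcases hβ.eq_bot_or_le_of_mem hw with rfl | hwb
  · exact bot_left_mem _ _
  rcases (hb.map γ).2 w hwb with hwx | hxw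
  · exact le_def.1 le_sup_right _ (mem_const.2 (Or.inr hwx))
  · have hrs' : r ≤ s' :=
      (hs' r).1 (hβ.mem_map_tmul_of_mem hb.1.le le_rfl (mem_of_le hw ⟨le_rfl, hxw⟩))
    exact le_def.1 le_sup_left _ (mem_of_le (mem_tmul_self _ _) ⟨hrs', hwb⟩)

lemma map_tmul_le_of_isNode (hβ : LiesOver β γ) (hb : IsNode x b)
    (h : β (tmul m s x) = tmul m s' (γ x)) (hs' : ¬ γ x ≤ m.threshold s') :
    β (tmul m s b) ≤ tmul m s' (γ b) := by
  refine le_def.2 fun ⟨r, w⟩ hw => ?_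
  rcases hβ.eq_bot_or_le_of_mem hw with rfl | hwb
  · exact bot_left_mem _ _
  rcases (hb.map γ).2 w hwb with hwx | hxw
  · have := hβ.mem_map_tmul_of_mem hb.1.le hwx hw
    rw [h] at this
    exact le_def.1 (tmul_mono le_rfl (γ.monotone hb.1.le)) _ this
  · have := hβ.mem_map_tmul_of_mem hb.1.le le_rfl (mem_of_le hw ⟨le_rfl, hxw⟩)
    rw [h] at this
    exact mem_of_le (mem_tmul_self _ _) ⟨(mem_tmul.1 this).1.resolve_right hs', hwb⟩

lemma map_tmul_of_map_tmul (hβ : LiesOver β γ) (hx : IsSpanningNode x)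
    (h : β (tmul m s x) = tmul m s' (γ x)) (hs : ¬ x ≤ m.threshold s)
    (hs' : ¬ γ x ≤ m.threshold s') (y : C) : β (tmul m s y) = tmul m s' (γ y) := by
  have map_of_isNode (b : C) (hb : IsNode x b) : β (tmul m s b) = tmul m s' (γ b) := by
    refine le_antisymm (hβ.map_tmul_le_of_isNode hb h hs') ?_
    have := hβ.symm.map_tmul_le_of_isNode (hb.map γ) (s := s') (s' := s)
      (by rw [β.symm_apply_eq, γ.symm_apply_apply, h]) (by rwa [γ.symm_apply_apply])
    rwa [β.symm_apply_le, γ.symm_apply_apply] at this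
  obtain ⟨b, b', hb, hb', hy⟩ := hx.2 y
  rw [← inf_eq_right.2 hy, ← tmul_inf_const, tmul_sup_right, map_inf, map_sup, map_of_isNode b hb,
    map_of_isNode b' hb', hβ, ← tmul_sup_right, tmul_inf_const, map_inf, map_sup]

end LiesOver

namespace BoxProd

variable {S C : Type*} [Lattice S] [BoundedOrder S] [Lattice C] [OrderBot C]
variable {m : Marking S C} {x : C} {s : S}

lemma not_le_threshold (hx : x ≠ ⊥) (hs : m.threshold s ⊓ x = ⊥) : ¬ x ≤ m.threshold s :=
  fun h => hx (by rwa [inf_eq_right.2 h] at hs)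

lemma tmul_le_tmul_iff (hx : x ≠ ⊥) (hs : m.threshold s ⊓ x = ⊥) {r : S} :
    tmul m r x ≤ tmul m s x ↔ r ≤ s :=
  ⟨fun h => (mem_tmul.1 (tmul_le.1 h)).1.resolve_right (not_le_threshold hx hs),
    fun h => tmul_mono h le_rfl⟩

lemma eq_of_tmul_le_sup_const {b : C} {r : S} (hxb : x < b) (hrs : r ≤ s) (hs : s ≠ ⊤)
    (h : tmul m s b ≤ tmul m r b ⊔ const m x) : r = s := by
  by_contra hne
  have hlt := lt_of_le_of_ne hrs hne
  have hr : m.threshold r = ⊥ := by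
    by_contra hr
    exact hs (m.eq_top_of_lt hlt hr)
  have admits : m.Admits (r, x) := hr.le.trans bot_le
  rcases inBox_of_mem_sup (H := tmul m r b) (K := const m x) admits
    (fun _ => inBox_of_mem_tmul admits (Or.inl le_rfl))
    (fun _ => inBox_of_mem_tmul admits (Or.inr le_rfl)) (tmul_le.1 h) with h | h
  · exact hlt.not_ge h
  · exact hxb.not_ge h

end BoxProd

namespace LiesOver

open BoxProd

variable {S C : Type*} [Lattice S] [BoundedOrder S] [Lattice C] [OrderBot C]
variable {m : Marking S C} {β : BoxProd m ≃o BoxProd m} {γ : C ≃o C} {x : C} {s s' : S}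

lemma exists_map_tmul_eq (hβ : LiesOver β γ) (hx : IsSpanningNode x)
    (hs : m.threshold s ⊓ x = ⊥) (hs_ne : s ≠ ⊤) :
    ∃ s', β (tmul m s x) = tmul m s' (γ x) := by
  obtain ⟨b, -, hb, -, -⟩ := hx.2 ⊥
  obtain ⟨s', hs', bound⟩ := hβ.exists_row_bound x s
  obtain ⟨r, hr, bound_symm⟩ := hβ.symm.exists_row_bound (γ x) s'
  have bound_symm := bound_symm _ (hb.map γ)
  simp only [γ.symm_apply_apply] at hr bound_symm
  have hrs : r ≤ s := (tmul_le_tmul_iff hx.1 hs).1 (hr.trans ((β.symm_apply_le).2 hs'))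
  have tmul_le : tmul m s b ≤ tmul m r b ⊔ const m x := by
    have := β.symm.monotone (bound b hb)
    rw [β.symm_apply_apply, map_sup, hβ.symm, γ.symm_apply_apply] at this
    exact this.trans (sup_le bound_symm le_sup_right)
  obtain rfl := eq_of_tmul_le_sup_const hb.1 hrs hs_ne tmul_le
  exact ⟨s', le_antisymm ((β.le_symm_apply).1 hr) hs'⟩

lemma threshold_inf_eq_bot [Nontrivial S] (hβ : LiesOver β γ) (hs : m.threshold s ⊓ x = ⊥)
    (hs_ne : s ≠ ⊤) (h : β (tmul m s x) = tmul m s' (γ x)) : m.threshold s' ⊓ γ x = ⊥ := by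
  have const_le' : const m (m.threshold s' ⊓ γ x) ≤ β (tmul m s x) := by
    rw [h]
    exact const_le.2 (mem_tmul.2 ⟨Or.inr inf_le_left, Or.inr inf_le_right⟩)
  rw [← β.symm_apply_le, hβ.symm, const_le, mem_tmul, top_le_iff] at const_le'
  have := le_inf (const_le'.1.resolve_left hs_ne) (const_le'.2.resolve_left top_ne_bot)
  rwa [hs, le_bot_iff, map_eq_bot_iff] at this

lemma exists_map_tmul [Nontrivial S] (hβ : LiesOver β γ) (hx : IsSpanningNode x)
    (hs : m.threshold s ⊓ x = ⊥) :
    ∃ s', m.threshold s' ⊓ γ x = ⊥ ∧ ∀ y, β (tmul m s y) = tmul m s' (γ y) := by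
  by_cases hs_top : s = ⊤
  · subst hs_top
    exact ⟨⊤, by simp [m.threshold_top], hβ⟩
  · obtain ⟨s', hs'⟩ := hβ.exists_map_tmul_eq hx hs hs_top
    have hs'_bot := hβ.threshold_inf_eq_bot hs hs_top hs'
    exact ⟨s', hs'_bot, hβ.map_tmul_of_map_tmul hx hs' (not_le_threshold hx.1 hs)
      (not_le_threshold (hx.map γ).1 hs'_bot)⟩

end LiesOver

/-- The elements of `S` whose threshold is disjoint from `z`. -/
abbrev Marking.Regular {S C : Type*} [Lattice S] [BoundedOrder S] [Lattice C] [OrderBot C]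
    (m : Marking S C) (z : C) := {s : S // m.threshold s ⊓ z = ⊥}

namespace LiesOver

open BoxProd

variable {S C : Type*} [Lattice S] [BoundedOrder S] [Lattice C] [OrderBot C]
variable {m : Marking S C} {β : BoxProd m ≃o BoxProd m} {γ : C ≃o C} {x : C}

theorem exists_map_tmul_eq_tmul [Nontrivial S] (hβ : LiesOver β γ) (hx : IsSpanningNode x) :
    ∃ σ : m.Regular x ≃o m.Regular (γ x),
      ∀ (s : m.Regular x) y, β (tmul m s y) = tmul m (σ s) (γ y) := by
  have image (s : m.Regular x) : ∃ s' : m.Regular (γ x), ∀ y, β (tmul m s y) = tmul m s' (γ y) := by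
    obtain ⟨s', hs', h⟩ := hβ.exists_map_tmul hx s.2
    exact ⟨⟨s', hs'⟩, h⟩
  have preimage (s : m.Regular (γ x)) :
      ∃ s' : m.Regular x, ∀ y, β.symm (tmul m s y) = tmul m s' (γ.symm y) := by
    obtain ⟨s', hs', h⟩ := hβ.symm.exists_map_tmul (hx.map γ) s.2
    rw [γ.symm_apply_apply] at hs'
    exact ⟨⟨s', hs'⟩, h⟩
  have injective {z : C} (hz : z ≠ ⊥) {s r : m.Regular z} (h : tmul m s z = tmul m r z) : s = r :=
    le_antisymm ((tmul_le_tmul_iff hz r.2).1 h.le) ((tmul_le_tmul_iff hz s.2).1 h.ge)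
  choose f hf using image
  choose g hg using preimage
  refine ⟨⟨⟨f, g, fun s => injective hx.1 ?_, fun s => injective (hx.map γ).1 ?_⟩,
    fun {s r} => ?_⟩, hf⟩
  · have := hg (f s) (γ x)
    rw [← hf, β.symm_apply_apply, γ.symm_apply_apply] at this
    exact this.symm
  · have := hf (g s) (γ.symm (γ x))
    rw [← hg, β.apply_symm_apply, γ.apply_symm_apply] at this
    exact this.symm
  · change f s ≤ f r ↔ s ≤ r
    rw [← Subtype.coe_le_coe, ← tmul_le_tmul_iff (hx.map γ).1 (f r).2, ← hf, ← hf, β.le_iff_le,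
      tmul_le_tmul_iff hx.1 r.2, Subtype.coe_le_coe]

end LiesOver

/-! ### Rigidity -/

/-- A proper element which is not an atom and does not lie below a coatom. Among the regular
elements of a frame, this singles out the chain in terms of the order alone. -/
def IsChainLike {P : Type*} [PartialOrder P] [BoundedOrder P] (u : P) : Prop :=
  u ≠ ⊤ ∧ ¬ IsAtom u ∧ ∀ v, IsCoatom v → ¬ u ≤ v

lemma IsChainLike.map {P P' : Type*} [PartialOrder P] [BoundedOrder P] [PartialOrder P']
    [BoundedOrder P'] {u : P} (hu : IsChainLike u) (σ : P ≃o P') : IsChainLike (σ u) := by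
  refine ⟨(map_eq_top_iff σ).not.2 hu.1, (σ.isAtom_iff u).not.2 hu.2.1, fun v hv huv => ?_⟩
  exact hu.2.2 _ ((σ.symm.isCoatom_iff v).2 hv) ((σ.le_symm_apply).2 huv)

instance {S C : Type*} [Lattice S] [BoundedOrder S] [Lattice C] [OrderBot C] {m : Marking S C}
    {z : C} : BoundedOrder (m.Regular z) where
  top := ⟨⊤, by rw [m.threshold_top, bot_inf_eq]⟩
  le_top _ := le_top (α := S)
  bot := ⟨⊥, by rw [m.threshold_bot, bot_inf_eq]⟩
  bot_le _ := bot_le (α := S)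

namespace Frame

variable {A J C : Type*} [Lattice A] [OrderBot A] [LinearOrder J] [Lattice C] [OrderBot C]
variable {t : J → C} {z z' : C}

/-- An element of the skeleton as a regular element of the frame. -/
def regularBase (l : Skeleton A J) : (marking t : Marking (Frame A J) C).Regular z :=
  ⟨.base l, by simp⟩

lemma regularBase_le_iff {l l' : Skeleton A J} :
    (regularBase l : (marking t : Marking (Frame A J) C).Regular z) ≤ regularBase l' ↔ l ≤ l' :=
  Iff.rfl

lemma regularBase_injective : Function.Injective
    (regularBase : Skeleton A J → (marking t : Marking (Frame A J) C).Regular z) :=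
  fun _ _ h => le_antisymm (regularBase_le_iff.1 h.le) (regularBase_le_iff.1 h.ge)

lemma isCoatom_regular_cap {l : Skeleton A J} {h : HasCap l}
    (hz : (marking t).threshold (.cap l h) ⊓ z = ⊥) :
    IsCoatom (⟨.cap l h, hz⟩ : (marking t : Marking (Frame A J) C).Regular z) :=
  ⟨fun hl => Capped.cap_ne_top l h (congrArg Subtype.val hl),
    fun _ hv => Subtype.ext (Capped.eq_top_of_cap_lt hv)⟩

lemma isAtom_regularBase_atom (j : J) :
    IsAtom (regularBase (.atom j) : (marking t : Marking (Frame A J) C).Regular z) := by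
  refine ⟨fun h => Skeleton.not_atom_le_elt (regularBase_injective h).le,
    fun v hv => Subtype.ext ?_⟩
  obtain ⟨v, hz⟩ := v
  have hle : v ≤ atom j := hv.le
  have hne : ¬ atom j ≤ v := hv.not_ge
  induction v using cases with
  | elt y => exact congrArg elt (Skeleton.elt_le_atom.1 (Capped.base_le_base.1 hle))
  | atom i =>
    obtain rfl : i = j := hle
    exact absurd le_rfl hne
  | chain k => exact absurd (Capped.base_le_base.1 hle) Skeleton.not_chain_le_atom
  | eltCap y => exact absurd hle Capped.not_cap_le_base
  | atomCap i => exact absurd hle Capped.not_cap_le_base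
  | top => exact absurd hle Capped.not_top_le_base

lemma isChainLike_regularBase_chain [Nonempty J] [NoMaxOrder J] [Nontrivial A] (k : WithBot J) :
    IsChainLike (regularBase (.chain k) : (marking t : Marking (Frame A J) C).Regular z) := by
  refine ⟨fun h => Capped.base_ne_top _ (congrArg Subtype.val h), fun h => ?_, fun v hv hkv => ?_⟩
  · obtain ⟨x, hx⟩ := exists_ne (⊥ : A)
    have hlt : (regularBase (.elt x) : (marking t : Marking (Frame A J) C).Regular z) <
        regularBase (.chain k) :=
      lt_of_le_not_ge (Skeleton.elt_le_chain x k) (Skeleton.not_chain_le_elt (x := x) (k := k))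
    exact hx (Skeleton.elt.inj (regularBase_injective (h.2 _ hlt)))
  obtain ⟨v, hz⟩ := v
  have hkv : chain k ≤ v := hkv
  induction v using cases with
  | elt y => exact Skeleton.not_chain_le_elt (Capped.base_le_base.1 hkv)
  | atom i => exact Skeleton.not_chain_le_atom (Capped.base_le_base.1 hkv)
  | chain k' =>
    obtain ⟨k'', hk''⟩ := exists_gt k'
    have := hv.2 (regularBase (.chain k'')) (lt_of_le_not_ge hk''.le hk''.not_ge)
    exact Capped.base_ne_top _ (congrArg Subtype.val this)
  | eltCap y => exact Skeleton.not_chain_le_elt (Capped.base_le_cap.1 hkv)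
  | atomCap i => exact Skeleton.not_chain_le_atom (Capped.base_le_cap.1 hkv)
  | top => exact hv.1 rfl

lemma exists_eq_regularBase_chain {s : (marking t : Marking (Frame A J) C).Regular z}
    (hs : IsChainLike s) : ∃ k, s = regularBase (.chain k) := by
  obtain ⟨s, hz⟩ := s
  induction s using cases with
  | elt x =>
    have hle : (elt x : Frame A J) ≤ eltCap x := Capped.base_le_cap.2 le_rfl
    exact (hs.2.2 ⟨eltCap x, by simp⟩ (isCoatom_regular_cap _) hle).elim
  | atom j => exact absurd (isAtom_regularBase_atom j) hs.2.1
  | chain k => exact ⟨k, rfl⟩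
  | eltCap x => exact absurd le_rfl (hs.2.2 _ (isCoatom_regular_cap hz))
  | atomCap j => exact absurd le_rfl (hs.2.2 _ (isCoatom_regular_cap hz))
  | top => exact absurd rfl hs.1

section OrderIso

variable [Nonempty J] [NoMaxOrder J] [WellFoundedLT J] [Nontrivial A]
variable (σ : (marking t : Marking (Frame A J) C).Regular z ≃o
  (marking t : Marking (Frame A J) C).Regular z')

lemma map_regularBase_chain (k : WithBot J) :
    σ (regularBase (.chain k)) = regularBase (.chain k) := by
  choose f hf using fun k =>
    exists_eq_regularBase_chain ((isChainLike_regularBase_chain k).map σ)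
  have le_iff (k k') : f k ≤ f k' ↔ k ≤ k' := by
    rw [← Skeleton.chain_le_chain (A := A), ← regularBase_le_iff (t := t) (z := z'), ← hf, ← hf,
      σ.le_iff_le, regularBase_le_iff, Skeleton.chain_le_chain]
  have surjective : Function.Surjective f := fun k => by
    obtain ⟨k', hk'⟩ := exists_eq_regularBase_chain
      ((isChainLike_regularBase_chain (t := t) (A := A) k).map σ.symm)
    rw [σ.symm_apply_eq, hf] at hk'
    exact ⟨k', (Skeleton.chain.inj (regularBase_injective hk')).symm⟩
  -- An automorphism of a well-order is the identity.
  have f_eq : StrictMono.orderIsoOfSurjective f (strictMono_of_le_iff_le fun k k' =>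
      (le_iff k k').symm) surjective = OrderIso.refl _ := Subsingleton.elim _ _
  rw [hf, show f k = k from congrArg (fun e : WithBot J ≃o WithBot J => e k) f_eq]

lemma map_regularBase_le_chain_iff (l : Skeleton A J) (k : WithBot J) :
    (σ (regularBase l)).1 ≤ chain k ↔ l ≤ .chain k := by
  change σ (regularBase l) ≤ regularBase (.chain k) ↔ _
  rw [← map_regularBase_chain σ k, σ.le_iff_le, regularBase_le_iff]

lemma map_regularBase_ne_chain {l : Skeleton A J} (hl : HasCap l) (k : WithBot J) :
    (σ (regularBase l)).1 ≠ chain k := fun h => by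
  have : σ (regularBase l) = regularBase (.chain k) := Subtype.ext h
  rw [← map_regularBase_chain σ k, σ.injective.eq_iff] at this
  exact hl k (regularBase_injective this)

lemma map_regularBase_atom (j : J) : (σ (regularBase (.atom j))).1 = atom j := by
  have le_chain_iff := map_regularBase_le_chain_iff σ (.atom j)
  have ne_chain := map_regularBase_ne_chain σ (l := .atom j) nofun
  simp only [Skeleton.atom_le_chain] at le_chain_iff
  generalize (σ (regularBase (.atom j))).1 = u at le_chain_iff ne_chain
  induction u using cases with
  | elt y => simpa using le_chain_iff ⊥
  | atom i =>
    have hij := (le_chain_iff j).2 le_rfl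
    have hji := (le_chain_iff i).1 (Capped.base_le_base.2 (Skeleton.atom_le_chain.2 le_rfl))
    exact congrArg atom (le_antisymm (WithBot.coe_le_coe.1 hij) (WithBot.coe_le_coe.1 hji))
  | chain k => exact absurd rfl (ne_chain k)
  | eltCap y => exact absurd ((le_chain_iff j).2 le_rfl) Capped.not_cap_le_base
  | atomCap i => exact absurd ((le_chain_iff j).2 le_rfl) Capped.not_cap_le_base
  | top => exact absurd ((le_chain_iff j).2 le_rfl) Capped.not_top_le_base

lemma exists_map_regularBase_elt (x : A) : ∃ x', (σ (regularBase (.elt x))).1 = elt x' := by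
  have le_chain := (map_regularBase_le_chain_iff σ (.elt x) ⊥).2 (Skeleton.elt_le_chain _ _)
  have ne_chain := map_regularBase_ne_chain σ (l := .elt x) nofun
  generalize (σ (regularBase (.elt x))).1 = u at le_chain ne_chain
  induction u using cases with
  | elt y => exact ⟨y, rfl⟩
  | atom i => simp at le_chain
  | chain k => exact absurd rfl (ne_chain k)
  | eltCap y => exact absurd le_chain Capped.not_cap_le_base
  | atomCap i => exact absurd le_chain Capped.not_cap_le_base
  | top => exact absurd le_chain Capped.not_top_le_base

end OrderIso

end Frame

namespace BoxProd

lemma eq_top_or_le_of_const_le_sup_tmul {S C : Type*} [Lattice S] [BoundedOrder S] [Lattice C]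
    [OrderBot C] {m : Marking S C} {H : BoxProd m} {q : S × C} {s : S} {y : C} (hq : m.Admits q)
    (hqH : ∀ p ∈ H, InBox q p) (hs : s ≤ q.1) (h : const m y ≤ H ⊔ tmul m s y) :
    q.1 = ⊤ ∨ y ≤ q.2 :=
  (inBox_of_mem_sup hq hqH (fun _ => inBox_of_mem_tmul hq (Or.inl hs)) (const_le.1 h)).imp_left
    top_le_iff.1

variable {A J C : Type*} [Lattice A] [OrderBot A] [LinearOrder J] [Lattice C] [OrderBot C]
variable {t : J → C} {j : J} {y : C}

lemma exists_lt_const_sup_eq (h : ¬ y ≤ t j) :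
    ∃ H, tmul (Frame.marking t : Marking (Frame A J) C) (Frame.atom j) y ≤ H ∧ H < const _ y ∧
      H ⊔ tmul _ (Frame.chain j) y = const _ y := by
  refine ⟨tmul _ (Frame.atomCap j) y, tmul_mono (Capped.base_le_cap.2 le_rfl) le_rfl,
    lt_of_le_not_ge (tmul_le_const _ _) fun hle => ?_, ?_⟩
  · rcases (mem_tmul.1 (const_le.1 hle)).1 with htop | hy
    · exact Capped.not_top_le_cap htop
    · exact h hy
  · rw [← tmul_sup_left, Frame.atomCap_sup_base Skeleton.not_chain_le_atom]
    rfl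

lemma not_le_of_lt_const_of_sup_eq {H : BoxProd (Frame.marking t : Marking (Frame A J) C)}
    (hatom : tmul _ (Frame.atom j) y ≤ H) (hlt : H < const _ y)
    (hsup : H ⊔ tmul _ (Frame.chain j) y = const _ y) : ¬ y ≤ t j := by
  intro hy
  obtain ⟨⟨α, δ⟩, hq, hqH, hqy⟩ := exists_separating_box (H := H) (p := (⊤, y))
    fun h => hlt.not_ge (const_le.2 h)
  simp only [InBox, not_or] at hqy
  have hjα : Frame.atom j ≤ α := (hqH _ (tmul_le.1 hatom)).resolve_right hqy.2
  rcases α with l | ⟨l, hl⟩ | _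
  · have := eq_top_or_le_of_const_le_sup_tmul (q := (.base (l ⊔ .chain j), δ))
      (by simp [Marking.Admits])
      (fun p hp => (hqH p hp).imp_left fun h => h.trans (Capped.base_le_base.2 le_sup_left))
      (Capped.base_le_base.2 le_sup_right) hsup.ge
    exact this.elim (Capped.base_ne_top _) hqy.2
  · rcases l with x | i | k
    · exact Skeleton.not_atom_le_elt (Capped.base_le_cap.1 hjα)
    · obtain rfl : j = i := hjα
      exact hqy.2 (hy.trans hq)
    · exact hl k rfl
  · exact hqy.1 le_rfl

end BoxProd

namespace LiesOver

open BoxProd Frame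

variable {A J : Type*} [Lattice A] [OrderBot A] [LinearOrder J] [Nonempty J] [NoMaxOrder J]
variable [WellFoundedLT J] [Nontrivial A]
variable {C : Type*} [Lattice C] [OrderBot C] {t : J → C} {x : C} {γ : C ≃o C}
variable {β : BoxProd (marking t : Marking (Frame A J) C) ≃o
  BoxProd (marking t : Marking (Frame A J) C)}

lemma map_tmul_atom (hβ : LiesOver β γ) (hx : IsSpanningNode x) (j : J) (y : C) :
    β (tmul _ (atom j) y) = tmul _ (atom j) (γ y) := by
  obtain ⟨σ, hσ⟩ := hβ.exists_map_tmul_eq_tmul hx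
  exact (hσ (regularBase (.atom j)) y).trans (by rw [map_regularBase_atom])

lemma map_tmul_chain (hβ : LiesOver β γ) (hx : IsSpanningNode x) (k : WithBot J) (y : C) :
    β (tmul _ (chain k) y) = tmul _ (chain k) (γ y) := by
  obtain ⟨σ, hσ⟩ := hβ.exists_map_tmul_eq_tmul hx
  exact (hσ (regularBase (.chain k)) y).trans (by rw [map_regularBase_chain]; rfl)

lemma exists_map_tmul_elt (hβ : LiesOver β γ) (hx : IsSpanningNode x) (a : A) :
    ∃ a', ∀ y, β (tmul _ (elt a) y) = tmul _ (elt a') (γ y) := by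
  obtain ⟨σ, hσ⟩ := hβ.exists_map_tmul_eq_tmul hx
  obtain ⟨a', ha'⟩ := exists_map_regularBase_elt σ a
  exact ⟨a', fun y => (hσ (regularBase (.elt a)) y).trans (by rw [ha'])⟩

lemma le_apply (hβ : LiesOver β γ) (hx : IsSpanningNode x) (ht : Function.Surjective t) (y : C) :
    y ≤ γ y := by
  obtain ⟨j, hj⟩ := ht (γ y)
  rw [← hj]
  by_contra hy
  obtain ⟨H, hatom, hlt, hsup⟩ := exists_lt_const_sup_eq (A := A) hy
  refine not_le_of_lt_const_of_sup_eq (H := β H) ?_ ?_ ?_ hj.ge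
  · rw [← hβ.map_tmul_atom hx]
    exact β.monotone hatom
  · rw [← hβ y]
    exact β.strictMono hlt
  · rw [← hβ.map_tmul_chain hx, ← map_sup, hsup, hβ y]

lemma eq_refl (hβ : LiesOver β γ) (hx : IsSpanningNode x) (ht : Function.Surjective t) :
    γ = OrderIso.refl C := by
  ext y
  refine le_antisymm ?_ (hβ.le_apply hx ht y)
  rw [← γ.le_symm_apply]
  exact hβ.symm.le_apply (hx.map γ) ht y

end LiesOver

lemma liesOver_refl {A J C : Type u} [Lattice A] [OrderBot A] [Nontrivial A] [LinearOrder J]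
    [Nonempty J] [NoMaxOrder J] [WellFoundedLT J] [Lattice C] [OrderBot C] {t : J → C} {x : C}
    (hJ : IsLargeIndex A J C) (e : J ↪ {j // t j = ⊥}) (ht : Function.Surjective t)
    (hx : IsSpanningNode x)
    (β : BoxProd (Frame.marking t : Marking (Frame A J) C) ≃o
      BoxProd (Frame.marking t : Marking (Frame A J) C)) :
    LiesOver β (OrderIso.refl C) := by
  have := NoMaxOrder.infinite (α := J)
  obtain ⟨γ, hβ⟩ := exists_liesOver hJ e β
  exact hβ.eq_refl hx ht ▸ hβ

/-! ### Automorphism-preserving embeddings -/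

/-- The order isomorphism underlying a lattice automorphism. -/
noncomputable def IsLatAuto.toOrderIso {L : Type*} [Lattice L] {h : L → L} (hh : IsLatAuto L h) :
    L ≃o L where
  toEquiv := Equiv.ofBijective h hh.1
  map_rel_iff' {x y} := by
    change h x ≤ h y ↔ _
    rw [← sup_eq_right, ← hh.2.1, hh.1.1.eq_iff, sup_eq_right]

lemma isLatAuto_orderIso {L : Type*} [Lattice L] (e : L ≃o L) : IsLatAuto L e :=
  ⟨e.bijective, fun _ _ => map_sup e _ _, fun _ _ => map_inf e _ _⟩

lemma APEmb.of_orderIso {A L : Type*} [Lattice A] [Lattice L] {f : A → L}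
    (injective : Function.Injective f) (sup : ∀ a b, f (a ⊔ b) = f a ⊔ f b)
    (inf : ∀ a b, f (a ⊓ b) = f a ⊓ f b)
    (extend : ∀ α : A ≃o A, ∃ β : L ≃o L, ∀ a, β (f a) = f (α a))
    (restrict : ∀ β : L ≃o L, ∃ α : A ≃o A, ∀ a, β (f a) = f (α a))
    (rigid : ∀ β : L ≃o L, (∀ a, β (f a) = f a) → β = OrderIso.refl L) : APEmb A L f := by
  refine ⟨injective, sup, inf, fun α hα => ?_, fun β hβ => ?_⟩
  · obtain ⟨β, hβ⟩ := extend hα.toOrderIso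
    refine ⟨β, ⟨isLatAuto_orderIso β, hβ⟩, fun β' ⟨hβ', hβ'α⟩ => funext fun x => ?_⟩
    have h := rigid (hβ'.toOrderIso.trans β.symm) fun a => by
      rw [OrderIso.trans_apply, β.symm_apply_eq, hβ]
      exact hβ'α a
    have hx := congrArg (fun e : L ≃o L => e x) h
    exact (β.symm_apply_eq).1 hx
  · obtain ⟨α, hα⟩ := restrict hβ.toOrderIso
    exact ⟨α, isLatAuto_orderIso α, hα⟩

namespace BoxProd

variable {S S' C : Type*} [Lattice S] [BoundedOrder S] [Lattice S'] [BoundedOrder S'] [Lattice C]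
variable [OrderBot C] {m : Marking S C} {m' : Marking S' C}

open scoped Classical in
lemma isBoxInter_setOf_symm_mem (e : S ≃o S') (he : ∀ s, m'.threshold (e s) = m.threshold s)
    (H : BoxProd m) : IsBoxInter m' {p | (e.symm p.1, p.2) ∈ H} := by
  obtain ⟨B, hB, ⟨b, hb⟩, hH⟩ := H.2
  refine ⟨B.image fun q => (e q.1, q.2), ?_, ⟨b, Finset.mem_image.2 ⟨_, hb, by simp⟩⟩,
    fun p => (hH _).trans ?_⟩
  · simpa only [Finset.forall_mem_image, Marking.Admits, he] using fun q hq => hB q hq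
  · simp only [Finset.forall_mem_image, InBox, e.symm_apply_le]

/-- The isomorphism of box products induced by a threshold-preserving isomorphism of the first
factors. -/
def mapIso (e : S ≃o S') (he : ∀ s, m'.threshold (e s) = m.threshold s) :
    BoxProd m ≃o BoxProd m' where
  toFun H := ⟨{p | (e.symm p.1, p.2) ∈ H}, isBoxInter_setOf_symm_mem e he H⟩
  invFun H := ⟨{p | (e p.1, p.2) ∈ H},
    isBoxInter_setOf_symm_mem e.symm (fun s => by rw [← he, e.apply_symm_apply]) H⟩
  left_inv H := ext fun p => by
    change (e.symm (e p.1), p.2) ∈ H ↔ _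
    rw [e.symm_apply_apply]
  right_inv H := ext fun p => by
    change (e (e.symm p.1), p.2) ∈ H ↔ _
    rw [e.apply_symm_apply]
  map_rel_iff' {H K} := by
    refine ⟨fun h => le_def.2 fun p hp => ?_, fun h => le_def.2 fun p hp => le_def.1 h _ hp⟩
    have : (e.symm (e p.1), p.2) ∈ K := le_def.1 h (e p.1, p.2) <| by
      change (e.symm (e p.1), p.2) ∈ H
      rwa [e.symm_apply_apply]
    rwa [e.symm_apply_apply] at this

lemma mapIso_tmul (e : S ≃o S') (he : ∀ s, m'.threshold (e s) = m.threshold s) (s : S) (y : C) :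
    mapIso e he (tmul m s y) = tmul m' (e s) y := by
  ext ⟨r, w⟩
  change (e.symm r, w) ∈ tmul m s y ↔ _
  rw [mem_tmul, mem_tmul, e.symm_apply_le, he, map_eq_bot_iff]

lemma le_map_of_tmul_le_map {β : BoxProd m ≃o BoxProd m}
    (h : ∀ s y, tmul m s y ≤ β (tmul m s y)) (H : BoxProd m) : H ≤ β H :=
  le_iff_generators.2 fun p hp => tmul_le.1 <|
    (h p.1 p.2).trans (β.monotone (tmul_le.2 (mem_of_mem_generators hp)))

end BoxProd

section MapIso

variable {A A' J : Type*}

/-- The map of skeletons induced by a map of the copies of `A` and `A'`. -/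
def Skeleton.map (α : A → A') : Skeleton A J → Skeleton A' J
  | .elt x => .elt (α x)
  | .atom j => .atom j
  | .chain k => .chain k

lemma HasCap.map {l : Skeleton A J} (hl : HasCap l) (α : A → A') : HasCap (l.map α) := by
  rcases l with x | j | k
  · exact nofun
  · exact nofun
  · exact absurd rfl (hl k)

/-- The map of frames induced by a map of the copies of `A` and `A'`. -/
def Frame.map (α : A → A') : Frame A J → Frame A' J
  | .base l => .base (l.map α)
  | .cap l h => .cap (l.map α) (h.map α)
  | .top => .top

lemma Skeleton.map_map {α : A → A'} {α' : A' → A} (h : Function.LeftInverse α α')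
    (l : Skeleton A' J) : (l.map α').map α = l := by
  rcases l with x | i | k <;> simp [Skeleton.map, h _]

lemma Frame.map_map {α : A → A'} {α' : A' → A} (h : Function.LeftInverse α α')
    (s : Frame A' J) : (s.map α').map α = s := by
  rcases s with l | ⟨l, hl⟩ | _ <;> simp [Frame.map, Skeleton.map_map h]

variable [Lattice A] [OrderBot A] [Lattice A'] [OrderBot A'] [LinearOrder J]

lemma Skeleton.map_le_map (α : A ≃o A') {l l' : Skeleton A J} : l.map α ≤ l'.map α ↔ l ≤ l' := by
  rcases l with x | i | k <;> rcases l' with y | j | k' <;> simp [Skeleton.map]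

lemma Skeleton.map_inj (α : A ≃o A') {l l' : Skeleton A J} : l.map α = l'.map α ↔ l = l' := by
  simp only [le_antisymm_iff, map_le_map]

/-- The isomorphism of frames induced by an isomorphism of `A` and `A'`. -/
def Frame.mapIso (α : A ≃o A') : Frame A J ≃o Frame A' J where
  toFun := Frame.map α
  invFun := Frame.map α.symm
  left_inv := Frame.map_map α.symm_apply_apply
  right_inv := Frame.map_map α.apply_symm_apply
  map_rel_iff' {s r} := by
    change Frame.map α s ≤ Frame.map α r ↔ _
    rcases s with l | ⟨l, hl⟩ | _ <;> rcases r with l' | ⟨l', hl'⟩ | _ <;>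
      simp [Frame.map, Skeleton.map_le_map, Skeleton.map_inj]

lemma Frame.threshold_mapIso {C : Type*} [Lattice C] [OrderBot C] (t : J → C) (α : A ≃o A')
    (s : Frame A J) :
    (Frame.marking t).threshold (Frame.mapIso α s) = (Frame.marking t).threshold s := by
  rcases s with l | ⟨x | j | k, hl⟩ | _ <;> rfl

end MapIso

namespace BoxProd

open Frame

variable {A J C : Type*} [Lattice A] [OrderBot A] [LinearOrder J] [Lattice C] [OrderBot C]
variable {t : J → C}

lemma tmul_cap_le {l : Skeleton A J} {hl : HasCap l} {y : C}
    {H : BoxProd (marking t : Marking (Frame A J) C)} (hbase : tmul _ (.base l) y ≤ H)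
    (hsup : ∀ r, ¬ r ≤ l → const _ y ≤ H ⊔ tmul _ (.base r) y) : tmul _ (.cap l hl) y ≤ H := by
  rw [tmul_le]
  by_contra hcon
  obtain ⟨⟨α, δ⟩, hq, hqH, hqy⟩ := exists_separating_box hcon
  simp only [InBox, not_or] at hqy
  have hlα : .base l ≤ α := (hqH _ (tmul_le.1 hbase)).resolve_right hqy.2
  rcases α with l' | ⟨l', hl'⟩ | _
  · have := eq_top_or_le_of_const_le_sup_tmul (q := (.base (l' ⊔ .chain ⊥), δ))
      (by simp [Marking.Admits])
      (fun p hp => (hqH p hp).imp_left fun h => h.trans (Capped.base_le_base.2 le_sup_left))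
      (Capped.base_le_base.2 le_sup_right) (hsup _ (hl.not_chain_le ⊥))
    exact this.elim (Capped.base_ne_top _) hqy.2
  · have hl'l : ¬ l' ≤ l := fun h =>
      hqy.1 (Capped.cap_le_cap.2 (le_antisymm (Capped.base_le_cap.1 hlα) h))
    have := eq_top_or_le_of_const_le_sup_tmul hq hqH (Capped.base_le_cap.2 le_rfl) (hsup _ hl'l)
    exact this.elim (Capped.cap_ne_top _ _) hqy.2
  · exact hqy.1 le_top

variable {β : BoxProd (marking t : Marking (Frame A J) C) ≃o
  BoxProd (marking t : Marking (Frame A J) C)}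

lemma tmul_le_map_of_map_base (hconst : LiesOver β (OrderIso.refl C))
    (hbase : ∀ l y, β (tmul _ (.base l) y) = tmul _ (.base l) y) (s : Frame A J) (y : C) :
    tmul _ s y ≤ β (tmul _ s y) := by
  rcases s with l | ⟨l, hl⟩ | _
  · exact (hbase l y).ge
  · refine tmul_cap_le ?_ fun r hr => ?_
    · rw [← hbase]
      exact β.monotone (tmul_mono (Capped.base_le_cap.2 le_rfl) le_rfl)
    · rw [← hbase, ← map_sup, ← tmul_sup_left, Capped.cap_sup_base _ hr]
      exact (hconst y).ge
  · exact (hconst y).ge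

lemma eq_refl_of_map_base (hconst : LiesOver β (OrderIso.refl C))
    (hbase : ∀ l y, β (tmul _ (.base l) y) = tmul _ (.base l) y) : β = OrderIso.refl _ := by
  refine DFunLike.ext _ _ fun H =>
    le_antisymm ?_ (le_map_of_tmul_le_map (tmul_le_map_of_map_base hconst hbase) H)
  rw [OrderIso.refl_apply, ← β.le_symm_apply]
  exact le_map_of_tmul_le_map (tmul_le_map_of_map_base hconst.symm
    fun l y => by rw [β.symm_apply_eq, hbase]) H

lemma tmul_elt_le_tmul_elt_iff {x : C} (hx : x ≠ ⊥) {a a' : A} :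
    tmul (marking t : Marking (Frame A J) C) (elt a) x ≤ tmul _ (elt a') x ↔ a ≤ a' :=
  tmul_le_tmul_iff hx (by simp)

lemma tmul_elt_injective {x : C} (hx : x ≠ ⊥) :
    Function.Injective fun a : A => tmul (marking t : Marking (Frame A J) C) (elt a) x :=
  fun _ _ h => le_antisymm ((tmul_elt_le_tmul_elt_iff hx).1 h.le)
    ((tmul_elt_le_tmul_elt_iff hx).1 h.ge)

end BoxProd

section Rigid

open BoxProd Frame

variable {A J C : Type*} [Lattice A] [OrderBot A] [LinearOrder J] [Nonempty J] [NoMaxOrder J]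
variable [WellFoundedLT J] [Nontrivial A] [Lattice C] [OrderBot C] {t : J → C} {x : C}
variable {β : BoxProd (marking t : Marking (Frame A J) C) ≃o
  BoxProd (marking t : Marking (Frame A J) C)}

lemma LiesOver.exists_orderIso_map_tmul_elt (hβ : LiesOver β (OrderIso.refl C))
    (hx : IsSpanningNode x) : ∃ α : A ≃o A, ∀ a, β (tmul _ (elt a) x) = tmul _ (elt (α a)) x := by
  choose f hf using fun a => hβ.exists_map_tmul_elt hx a
  choose g hg using fun a => hβ.symm.exists_map_tmul_elt hx a
  replace hf (a : A) (y : C) : β (tmul _ (elt a) y) = tmul _ (elt (f a)) y := hf a y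
  replace hg (a : A) (y : C) : β.symm (tmul _ (elt a) y) = tmul _ (elt (g a)) y := hg a y
  refine ⟨⟨⟨f, g, fun a => ?_, fun a => ?_⟩, fun {a a'} => ?_⟩, fun a => hf a x⟩
  · apply tmul_elt_injective (t := t) hx.1
    dsimp only
    rw [← hg, ← hf, β.symm_apply_apply]
  · apply tmul_elt_injective (t := t) hx.1
    dsimp only
    rw [← hf, ← hg, β.apply_symm_apply]
  · change f a ≤ f a' ↔ a ≤ a'
    rw [← tmul_elt_le_tmul_elt_iff (t := t) hx.1, ← hf, ← hf, β.le_iff_le,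
      tmul_elt_le_tmul_elt_iff hx.1]

lemma LiesOver.eq_refl_of_map_tmul_elt (hβ : LiesOver β (OrderIso.refl C)) (hx : IsSpanningNode x)
    (h : ∀ a, β (tmul _ (elt a) x) = tmul _ (elt a) x) : β = OrderIso.refl _ := by
  refine eq_refl_of_map_base hβ fun l y => ?_
  rcases l with a | j | k
  · obtain ⟨a', ha'⟩ := hβ.exists_map_tmul_elt hx a
    obtain rfl : a' = a := tmul_elt_injective hx.1 ((ha' x).symm.trans (h a))
    exact ha' y
  · exact hβ.map_tmul_atom hx j y
  · exact hβ.map_tmul_chain hx k y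

end Rigid

theorem apEmb_tmul_elt {A J C : Type u} [Lattice A] [OrderBot A] [Nontrivial A] [LinearOrder J]
    [Nonempty J] [NoMaxOrder J] [WellFoundedLT J] [Lattice C] [OrderBot C] {t : J → C} {x : C}
    (hJ : IsLargeIndex A J C) (e : J ↪ {j // t j = ⊥}) (ht : Function.Surjective t)
    (hx : IsSpanningNode x) :
    APEmb A (BoxProd (Frame.marking t : Marking (Frame A J) C))
      fun a => BoxProd.tmul _ (Frame.elt a) x :=
  .of_orderIso (BoxProd.tmul_elt_injective hx.1)
    (fun a b => BoxProd.tmul_sup_left (Frame.elt a) (Frame.elt b) x)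
    (fun a b => BoxProd.tmul_inf_left (s := Frame.elt a) (t := Frame.elt b) rfl rfl x)
    (fun α => ⟨BoxProd.mapIso (Frame.mapIso α) (Frame.threshold_mapIso t α),
      fun a => BoxProd.mapIso_tmul _ _ (Frame.elt a) x⟩)
    (fun β => (liesOver_refl hJ e ht hx β).exists_orderIso_map_tmul_elt hx)
    (fun β => (liesOver_refl hJ e ht hx β).eq_refl_of_map_tmul_elt hx)

/-! ### The size of the frame -/

lemma Capped.exists_Iic_subset_insert {Λ : Type*} [Lattice Λ] {Q : Λ → Prop} {α : Capped Q}
    (hα : α ≠ ⊤) : ∃ l : Λ, Set.Iic α ⊆ insert α (base '' Set.Iic l) := by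
  rcases α with l | ⟨l, hl⟩ | _
  · refine ⟨l, fun s (hs : s ≤ _) => Or.inr ?_⟩
    rcases s with l' | ⟨l', hl'⟩ | _
    · exact ⟨l', hs, rfl⟩
    · exact absurd hs not_cap_le_base
    · exact absurd hs not_top_le_base
  · refine ⟨l, fun s (hs : s ≤ _) => ?_⟩
    rcases s with l' | ⟨l', hl'⟩ | _
    · exact Or.inr ⟨l', hs, rfl⟩
    · obtain rfl : l' = l := cap_le_cap.1 hs
      exact Or.inl rfl
    · exact absurd hs not_top_le_cap
  · exact absurd rfl hα

section Size

open Cardinal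

variable {A J C : Type u} [Lattice A] [OrderBot A] [LinearOrder J] {ν : Cardinal.{u}}

lemma Skeleton.exists_le_chain [Nonempty J] (l : Skeleton A J) : ∃ j : J, l ≤ .chain j := by
  rcases l with x | i | k
  · exact ⟨Classical.arbitrary J, elt_le_chain x _⟩
  · exact ⟨i, atom_le_chain.2 le_rfl⟩
  · induction k with
    | bot => exact ⟨Classical.arbitrary J, chain_le_chain.2 bot_le⟩
    | coe i => exact ⟨i, le_rfl⟩

lemma Skeleton.Iic_chain_subset (j : J) :
    Set.Iic (.chain j : Skeleton A J) ⊆ Set.range elt ∪ atom '' Set.Iic j ∪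
      insert (chain ⊥) ((fun i : J => chain i) '' Set.Iic j) := by
  rintro l (hl : l ≤ _)
  rcases l with x | i | k
  · exact Or.inl (Or.inl ⟨x, rfl⟩)
  · exact Or.inl (Or.inr ⟨i, WithBot.coe_le_coe.1 (atom_le_chain.1 hl), rfl⟩)
  · induction k with
    | bot => exact Or.inr (Or.inl rfl)
    | coe i => exact Or.inr (Or.inr ⟨i, WithBot.coe_le_coe.1 (chain_le_chain.1 hl), rfl⟩)

lemma Skeleton.mk_Iic_le [Nonempty J] (hν : ℵ₀ ≤ ν) (hA : #A ≤ ν) (hJ : ∀ j : J, #(Set.Iic j) ≤ ν)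
    (l : Skeleton A J) : #(Set.Iic l) ≤ ν := by
  obtain ⟨j, hj⟩ := l.exists_le_chain
  refine (mk_le_mk_of_subset ((Set.Iic_subset_Iic.2 hj).trans (Iic_chain_subset j))).trans ?_
  refine (mk_union_le _ _).trans (add_le_of_le hν ((mk_union_le _ _).trans (add_le_of_le hν ?_ ?_))
    (mk_insert_le.trans (add_le_of_le hν ?_ (one_le_aleph0.trans hν))))
  · exact mk_range_le.trans hA
  · exact mk_image_le.trans (hJ j)
  · exact mk_image_le.trans (hJ j)

lemma Frame.mk_Iic_le [Nonempty J] (hν : ℵ₀ ≤ ν) (hA : #A ≤ ν) (hJ : ∀ j : J, #(Set.Iic j) ≤ ν)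
    {α : Frame A J} (hα : α ≠ ⊤) : #(Set.Iic α) ≤ ν := by
  obtain ⟨l, hl⟩ := Capped.exists_Iic_subset_insert hα
  exact (mk_le_mk_of_subset hl).trans <| mk_insert_le.trans <|
    add_le_of_le hν (mk_image_le.trans (l.mk_Iic_le hν hA hJ)) (one_le_aleph0.trans hν)

lemma isLargeIndex_of_mk_Iic_le [Nonempty J] (hν : ℵ₀ ≤ ν) (hA : #A ≤ ν) (hC : #C ≤ ν)
    (hJ : ν < #J) (hIic : ∀ j : J, #(Set.Iic j) ≤ ν) : IsLargeIndex A J C := fun _ hα =>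
  ((mul_le_mul' (Frame.mk_Iic_le hν hA hIic hα) hC).trans (mul_eq_self hν).le).trans_lt hJ

lemma mk_Iic_ord_succ_toType_le (hν : ℵ₀ ≤ ν) (j : (Order.succ ν).ord.ToType) :
    #(Set.Iic j) ≤ ν := by
  have : NoMaxOrder (Order.succ ν).ord.ToType := Cardinal.noMaxOrder (hν.trans (Order.le_succ ν))
  obtain ⟨j', hj'⟩ := exists_gt j
  exact (mk_le_mk_of_subset fun i hi => lt_of_le_of_lt hi hj').trans
    (Order.lt_succ_iff.1 ((mk_Iio_lt j' (by simp)).trans_eq (mk_ord_toType _)))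

lemma exists_surjective_forall_embedding_fiber (J C : Type u) [Infinite J] [Nonempty C]
    (h : #C ≤ #J) : ∃ t : J → C, Function.Surjective t ∧ ∀ c, Nonempty (J ↪ {j // t j = c}) := by
  have hprod : #J = #(J × C) := by
    rw [mk_prod, lift_id, lift_id, mul_eq_left (aleph0_le_mk J) h (mk_ne_zero C)]
  obtain ⟨e⟩ := Cardinal.eq.1 hprod
  refine ⟨fun j => (e j).2, Prod.snd_surjective.comp e.surjective, fun c =>
    ⟨fun j => ⟨e.symm (j, c), by simp⟩, fun i j h => ?_⟩⟩
  exact congrArg Prod.fst (e.symm.injective (congrArg Subtype.val h))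

lemma exists_isLargeIndex (A C : Type u) [Lattice A] [OrderBot A] :
    ∃ (J : Type u) (_ : LinearOrder J) (_ : WellFoundedLT J) (_ : Nonempty J) (_ : NoMaxOrder J),
      IsLargeIndex A J C ∧ #C ≤ #J := by
  let ν : Cardinal.{u} := max ℵ₀ (max #A #C)
  have hν : ℵ₀ ≤ ν := le_max_left _ _
  have hA : #A ≤ ν := (le_max_left _ _).trans (le_max_right _ _)
  have hC : #C ≤ ν := (le_max_right _ _).trans (le_max_right _ _)
  let J := (Order.succ ν).ord.ToType
  have hJ : ν < #J := (Order.lt_succ ν).trans_eq (mk_ord_toType _).symm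
  have : Infinite J := infinite_iff.2 (hν.trans hJ.le)
  exact ⟨J, inferInstance, inferInstance, inferInstance,
    Cardinal.noMaxOrder (hν.trans (Order.le_succ ν)),
    isLargeIndex_of_mk_Iic_le hν hA hC hJ (mk_Iic_ord_succ_toType_le hν), hC.trans hJ.le⟩

end Size

/-! ### Conclusion -/

lemma exists_strongIndWitness₀_of_nontrivial (A C : Type u) [Lattice A] [OrderBot A] [Lattice C]
    [OrderBot C] [Nontrivial A] [Nontrivial C] :
    ∃ (L : Type u) (_ : Lattice L) (f : A → L) (g : C → L), StrongIndWitness₀ A C L f g := by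
  obtain ⟨D, _, _, e, x, he, he_bot, hx⟩ := exists_cpEmb_isSpanningNode C
  obtain ⟨J, _, _, _, _, hJ, hJD⟩ := exists_isLargeIndex A D
  obtain ⟨t, ht, hfib⟩ := exists_surjective_forall_embedding_fiber J D hJD
  obtain ⟨q⟩ := hfib ⊥
  obtain ⟨i, j, hij⟩ := exists_pair_ne J
  let m : Marking (Frame A J) D := Frame.marking t
  have simple : m.IsStronglySimple := Frame.isStronglySimple
    ⟨(q i : J), q j, fun h => hij (q.injective (Subtype.ext h)), (q i).2, (q j).2⟩
  refine ⟨BoxProd m, inferInstance, fun a => BoxProd.tmul m (Frame.elt a) x, BoxProd.const m ∘ e,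
    ?_, ?_, apEmb_tmul_elt hJ q ht hx, (BoxProd.cpEmb_const Frame.isSeparating simple).comp he⟩
  · have : BoxProd.tmul m (Frame.elt ⊥) x = ⊥ := BoxProd.tmul_bot_left x
    simpa only [this] using isBot_bot
  · simpa only [Function.comp_apply, he_bot, BoxProd.const_bot] using isBot_bot

lemma IsLatAuto.withTop_eq_id {A : Type*} [Lattice A] [OrderBot A] [Subsingleton A]
    {α : WithTop A → WithTop A} (hα : IsLatAuto (WithTop A) α) : α = id := by
  ext1 x
  induction x with
  | top => exact map_top hα.toOrderIso
  | coe a =>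
    rw [Subsingleton.elim a ⊥]
    exact map_bot hα.toOrderIso

lemma apEmb_of_withTop {A L : Type*} [Lattice A] [OrderBot A] [Subsingleton A] [Lattice L]
    {f : WithTop A → L} (hf : APEmb (WithTop A) L f) : APEmb A L fun a => f a := by
  obtain ⟨-, sup, inf, extend, restrict⟩ := hf
  have fixes (β : L ≃o L) (a : WithTop A) : β (f a) = f a := by
    obtain ⟨α, hα, hβα⟩ := restrict β (isLatAuto_orderIso β)
    rw [hβα, hα.withTop_eq_id, id]
  have unique (β : L ≃o L) : β = OrderIso.refl L := DFunLike.coe_injective <|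
    (extend id (isLatAuto_orderIso (OrderIso.refl _))).unique ⟨isLatAuto_orderIso β, fixes β⟩
      ⟨isLatAuto_orderIso _, fixes _⟩
  exact .of_orderIso (fun a b _ => Subsingleton.elim a b) (fun a b => sup a b) (fun a b => inf a b)
    (fun α => ⟨OrderIso.refl L, fun a => congrArg (fun a : A => f a) (Subsingleton.elim a (α a))⟩)
    (fun β => ⟨OrderIso.refl A, fun a => fixes β a⟩) fun β _ => unique β

/-- The Strong Independence Theorem for lattices with zero. -/
theorem strong_independence_lattices_with_zero
    (La Lc : Type u) [instA : Lattice La] [instA0 : OrderBot La]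
    [instC : Lattice Lc] [instC0 : OrderBot Lc] [Nontrivial Lc] :
    ∃ (L : Type u) (instL : Lattice L) (f : La → L) (g : Lc → L),
      @StrongIndWitness₀ La Lc instA instA0 instC instC0 L instL f g := by
  rcases subsingleton_or_nontrivial La with _ | _
  · obtain ⟨L, instL, f, g, f_bot, g_bot, hf, hg⟩ :=
      exists_strongIndWitness₀_of_nontrivial (WithTop La) Lc
    exact ⟨L, instL, fun a => f a, g, f_bot, g_bot, apEmb_of_withTop hf, hg⟩
  · exact exists_strongIndWitness₀_of_nontrivial La Lc
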